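/- arXiv:1512.02376 — 5 statements merged into one kernel-verified Lean document; each statement's English description precedes it below -/
import Mathlib

section
/- The set 𝒢_{D_{2m}} is a Gröbner basis of the toric ideal I_{D_{2m}} with respect to the term order ≻^even: the ideal generated by the ≻^even-leading monomials of all nonzero elements of I_{D_{2m}} equals the ideal generated by the ≻^even-leading monomials of the elements of 𝒢_{D_{2m}} (which are the first-written monomials of the listed binomials). -/
open MvPolynomial

/-- Index type for the variables of the polynomial ring `R` in the `D_{2m}` case (`n = 2m`).
The set `J = {3,5,…,n-1}` of odd integers is realised as `{2t+3 | t : Fin (m-1)}` and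
`J^c = {2,4,…,n-2}` as `{2t+2 | t : Fin (m-1)}`.  The constructors are:
`x1 ↦ x_1`, `xn ↦ x_n`, `xJ t ↦ x_{2t+3}` (`2t+3 ∈ J`), `xJc t ↦ x_{2t+2}` (`2t+2 ∈ J^c`),
`xP s t _ ↦ x_{2s+3,2t+3}` (a pair `k < ℓ` in `J`), `y t ↦ y_{2t+3}`. -/
inductive DVar (m : ℕ) : Type where
  | x1 : DVar m
  | xn : DVar m
  | xJ : Fin (m - 1) → DVar m
  | xJc : Fin (m - 1) → DVar m
  | xP : (s t : Fin (m - 1)) → s < t → DVar m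
  | y : Fin (m - 1) → DVar m

/-- The images of the variables under `π`, where `u_i = X i` inside
`K[u_1,…,u_n] ⊆ MvPolynomial ℕ K`:
`π(x_1) = u_1²`, `π(x_n) = u_n²` (`n = 2m`), `π(x_i) = u_i²` for `i ∈ J`,
`π(x_j) = u_j` for `j ∈ J^c`, `π(x_{k,ℓ}) = u_k u_ℓ` for `k < ℓ` in `J`, and
`π(y_i) = u_i u_1 u_n` for `i ∈ J`. -/
noncomputable def dImage (K : Type*) [Field K] (m : ℕ) : DVar m → MvPolynomial ℕ K
  | .x1 => X 1 ^ 2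
  | .xn => X (2 * m) ^ 2
  | .xJ t => X (2 * t.val + 3) ^ 2
  | .xJc t => X (2 * t.val + 2)
  | .xP s t _ => X (2 * s.val + 3) * X (2 * t.val + 3)
  | .y t => X (2 * t.val + 3) * X 1 * X (2 * m)

/-- The toric map `π : R → K[u_1,…,u_n]` for the `D_{2m}` configuration. -/
noncomputable def piD (K : Type*) [Field K] (m : ℕ) :
    MvPolynomial (DVar m) K →ₐ[K] MvPolynomial ℕ K :=
  aeval (dImage K m)

/-- The set `𝒢_{D_{2m}}` of binomials. -/
noncomputable def GD (K : Type*) [Field K] (m : ℕ) : Set (MvPolynomial (DVar m) K) :=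
  {g | (∃ (i j k l : Fin (m - 1)) (hij : i < j) (hjk : j < k) (hkl : k < l),
          g = X (DVar.xP i k (hij.trans hjk)) * X (DVar.xP j l (hjk.trans hkl))
              - X (DVar.xP i j hij) * X (DVar.xP k l hkl) ∨
          g = X (DVar.xP i l (hij.trans (hjk.trans hkl))) * X (DVar.xP j k hjk)
              - X (DVar.xP i j hij) * X (DVar.xP k l hkl)) ∨
      (∃ (i j k : Fin (m - 1)) (hij : i < j) (hjk : j < k),
          g = X (DVar.xP i j hij) * X (DVar.xP i k (hij.trans hjk))
              - X (DVar.xJ i) * X (DVar.xP j k hjk) ∨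
          g = X (DVar.xJ j) * X (DVar.xP i k (hij.trans hjk))
              - X (DVar.xP i j hij) * X (DVar.xP j k hjk) ∨
          g = X (DVar.xJ k) * X (DVar.xP i j hij)
              - X (DVar.xP i k (hij.trans hjk)) * X (DVar.xP j k hjk) ∨
          g = X (DVar.xP j k hjk) * X (DVar.y i)
              - X (DVar.xP i j hij) * X (DVar.y k) ∨
          g = X (DVar.xP i k (hij.trans hjk)) * X (DVar.y j)
              - X (DVar.xP i j hij) * X (DVar.y k)) ∨
      (∃ (i j : Fin (m - 1)) (hij : i < j),
          g = X (DVar.xJ i) * X (DVar.xJ j) - X (DVar.xP i j hij) ^ 2 ∨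
          g = X (DVar.xJ j) * X (DVar.y i) - X (DVar.xP i j hij) * X (DVar.y j) ∨
          g = X (DVar.xP i j hij) * X (DVar.y i) - X (DVar.xJ i) * X (DVar.y j) ∨
          g = X (DVar.xP i j hij) * X DVar.x1 * X DVar.xn - X (DVar.y i) * X (DVar.y j)) ∨
      (∃ i : Fin (m - 1),
          g = X (DVar.xJ i) * X DVar.x1 * X DVar.xn - X (DVar.y i) ^ 2)}

/-- `degRevLexLT rank a b` : the exponent vector `a` is strictly smaller than `b` in the
(degree) reverse lexicographic order determined by the ranking `rank` of the variables
(smaller rank = greater variable): `a ≺ b` iff `a` has smaller total degree, or the total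
degrees agree and in the least variable (i.e. largest rank) where they differ, `a` has the
larger exponent. -/
def degRevLexLT {σ : Type*} (rank : σ → ℕ) (a b : σ →₀ ℕ) : Prop :=
  (a.sum fun _ e => e) < (b.sum fun _ e => e) ∨
    ((a.sum fun _ e => e) = (b.sum fun _ e => e) ∧
      ∃ v, b v < a v ∧ ∀ w, rank v < rank w → a w = b w)

/-- `IsLeadExp lt f d` : `d` is the exponent vector of the leading monomial of `f` with
respect to the strict term order `lt`. -/
def IsLeadExp {σ K : Type*} [Field K] (lt : (σ →₀ ℕ) → (σ →₀ ℕ) → Prop)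
    (f : MvPolynomial σ K) (d : σ →₀ ℕ) : Prop :=
  d ∈ f.support ∧ ∀ e ∈ f.support, e ≠ d → lt e d

/-- The ideal of leading monomials (initial ideal) of an ideal `I` with respect to the
strict term order `lt`. -/
noncomputable def initialIdeal {σ K : Type*} [Field K] (lt : (σ →₀ ℕ) → (σ →₀ ℕ) → Prop)
    (I : Ideal (MvPolynomial σ K)) : Ideal (MvPolynomial σ K) :=
  Ideal.span {p | ∃ f ∈ I, f ≠ 0 ∧ ∃ d, IsLeadExp lt f d ∧ p = monomial d (1 : K)}

/-- The ranking of the variables realising the variable order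
`x_1 ≻ x_2 ≻ ⋯ ≻ x_n ≻ x_{j1,j2} ≻ x_{j3,j4} ≻ y_{k1} ≻ y_{k2}` (where `x_{j1,j2} ≻ x_{j3,j4}`
iff `j2 < j4`, or `j2 = j4` and `j1 < j3`, and `y_{k1} ≻ y_{k2}` iff `k1 < k2`); a smaller
rank means a greater variable. -/
def rankD (m : ℕ) : DVar m → ℕ
  | .x1 => 1
  | .xn => 2 * m
  | .xJ t => 2 * t.val + 3
  | .xJc t => 2 * t.val + 2
  | .xP s t _ => 2 * m + 1 + t.val * (2 * m) + s.val
  | .y t => 10 * m * m + 10 * m + t.val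

/-- The reverse lexicographic term order `≻^even` (as a strict "smaller-than" relation on
exponent vectors). -/
def precEven (m : ℕ) : (DVar m →₀ ℕ) → (DVar m →₀ ℕ) → Prop :=
  degRevLexLT (rankD m)

/-!
An element of the toric ideal has no term that is alone in its fibre, a fibre being the set of
exponent vectors with a given image under `π`. Hence it suffices to show that whenever `e ≺ d` lie
in the same fibre, `d` is divisible by a leading monomial of `𝒢`.

If `deg e < deg d`, then `d` has fewer factors `y` than `e`, and comparing the exponents of `u_1`,
`u_n` and some `u_t` (`t ∈ J`) shows that `d` is divisible by `x_1 x_n` times an `x_t` or `x_{s,t}`.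
If the degrees agree, let `v` be the least variable in which `d` and `e` differ; it occurs more
often in `e`. For each `u_i` dividing `π(v)`, the monomial `d` contains a variable greater than `v`
whose image is divisible by `u_i`. This forces `v` to be some `x_{s,t}` or `y_t`. In the second
case `d` also contains some `y_s` with `s < t`, because monomials of the same degree in one fibre
have equally many factors `y`. Two of the variables found in `d` multiply to a leading monomial of
`𝒢`.
-/

section Weight

open Finsupp

variable {σ τ M : Type*}

theorem weight_finsupp_apply [AddCommMonoid M] (a : σ → τ →₀ M) (d : σ →₀ ℕ) (i : τ) :
    weight a d i = weight (fun v => a v i) d := by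
  simp [weight_apply, Finsupp.sum]

variable [AddCommMonoid M] [PartialOrder M] [CanonicallyOrderedAdd M] {c : σ → M} {d e : σ →₀ ℕ}

theorem weight_le_weight [IsOrderedAddMonoid M] (h : ∀ v, 0 < c v → d v ≤ e v) :
    weight c d ≤ weight c e := by
  classical
  rw [weight_apply, weight_apply,
    sum_of_support_subset d (Finset.subset_union_left (s₂ := e.support)) _ (by simp),
    sum_of_support_subset e (Finset.subset_union_right (s₁ := d.support)) _ (by simp)]
  refine Finset.sum_le_sum fun v _ => ?_
  rcases eq_zero_or_pos (c v) with hv | hv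
  · simp [hv]
  · exact nsmul_le_nsmul_left zero_le (h v hv)

theorem weight_lt_weight [IsOrderedCancelAddMonoid M] (h : ∀ v, 0 < c v → d v ≤ e v)
    {v : σ} (hv : d v < e v) (hc : 0 < c v) : weight c d < weight c e := by
  calc weight c d < weight c d + c v := lt_add_of_pos_right _ hc
    _ = weight c (d + single v 1) := by rw [map_add, weight_single, one_nsmul]
    _ ≤ weight c e := weight_le_weight fun w hw => by
      rcases eq_or_ne v w with rfl | hvw
      · simpa using hv
      · simpa [single_apply, hvw] using h w hw

theorem exists_lt_of_weight_lt [IsOrderedAddMonoid M] (h : weight c d < weight c e) :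
    ∃ v, d v < e v ∧ 0 < c v := by
  by_contra! hle
  exact h.not_ge (weight_le_weight fun v hc => not_lt.mp fun hv => hle v hv hc)

theorem exists_lt_of_weight_eq [IsOrderedCancelAddMonoid M] (h : weight c d = weight c e)
    {v : σ} (hv : d v < e v) (hc : 0 < c v) : ∃ u, e u < d u ∧ 0 < c u := by
  by_contra! hle
  exact (weight_lt_weight (fun u hu => not_lt.mp fun hlt => hle u hlt hu) hv hc).ne h

end Weight

section ReverseLex

variable {σ : Type*} {rank : σ → ℕ} {d e : σ →₀ ℕ} {v : σ}

theorem degRevLexLT.ne (h : degRevLexLT rank d e) : d ≠ e := by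
  rintro rfl
  rcases h with h | ⟨_, v, hv, _⟩
  · exact h.false
  · exact hv.false

/-- `v` is the least variable (the one of largest rank) in which the monomials `d` and `e` differ,
and it has the larger exponent in `e`. If `d` and `e` have the same degree, its existence means
that `e` precedes `d` in the reverse lexicographic order. -/
def IsRevLexPivot (rank : σ → ℕ) (d e : σ →₀ ℕ) (v : σ) : Prop :=
  d v < e v ∧ ∀ w, rank v < rank w → e w = d w

theorem IsRevLexPivot.exists_ne_rank_le {M : Type*} [AddCommMonoid M] [PartialOrder M]
    [CanonicallyOrderedAdd M] [IsOrderedCancelAddMonoid M] (hv : IsRevLexPivot rank d e v)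
    {c : σ → M} (h : Finsupp.weight c d = Finsupp.weight c e) (hc : 0 < c v) :
    ∃ u, u ≠ v ∧ rank u ≤ rank v ∧ 0 < d u ∧ 0 < c u := by
  obtain ⟨u, hu, hcu⟩ := exists_lt_of_weight_eq h hv.1 hc
  refine ⟨u, ?_, ?_, by omega, hcu⟩
  · rintro rfl
    exact hu.not_gt hv.1
  · by_contra! hvu
    exact hu.ne (hv.2 u hvu)

end ReverseLex

section Reducible

variable {σ K : Type*} [Field K] {lt : (σ →₀ ℕ) → (σ →₀ ℕ) → Prop} {rank : σ → ℕ}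
  {G : Set (MvPolynomial σ K)} {a b d : σ →₀ ℕ}

/-- The monomial with exponent vector `d` is divisible by the leading monomial of an element of
`G`, so that it can be reduced modulo `G`. -/
def IsReducible (lt : (σ →₀ ℕ) → (σ →₀ ℕ) → Prop) (G : Set (MvPolynomial σ K))
    (d : σ →₀ ℕ) : Prop :=
  ∃ g ∈ G, ∃ c ≤ d, IsLeadExp lt g c

theorem isLeadExp_monomial_sub_monomial (hlt : lt b a) (hne : b ≠ a) :
    IsLeadExp lt (monomial a (1 : K) - monomial b 1) a := by
  classical
  refine ⟨by simp [coeff_monomial, hne], fun e he hea => ?_⟩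
  obtain rfl : b = e := by
    by_contra hbe
    simp [coeff_monomial, hbe, hea.symm] at he
  exact hlt

theorem IsReducible.of_binomial (hg : monomial a (1 : K) - monomial b 1 ∈ G)
    (hlt : degRevLexLT rank b a) (had : a ≤ d) : IsReducible (degRevLexLT rank) G d :=
  ⟨_, hg, a, had, isLeadExp_monomial_sub_monomial hlt hlt.ne⟩

theorem add_single_one_le {v : σ} (had : a ≤ d) (hav : a v = 0) (hdv : 0 < d v) :
    a + Finsupp.single v 1 ≤ d := by
  intro w
  rcases eq_or_ne v w with rfl | hvw
  · simpa [hav, Nat.one_le_iff_ne_zero] using hdv.ne'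
  · simpa [Finsupp.single_apply, hvw] using had w

theorem degRevLexLT_single_add_single {p q r s : σ} (hps : rank p < rank s)
    (hqs : rank q < rank s) :
    degRevLexLT rank (Finsupp.single r 1 + Finsupp.single s 1)
      (Finsupp.single p 1 + Finsupp.single q 1) := by
  wlog hrs : rank r ≤ rank s generalizing r s
  · rw [add_comm (Finsupp.single r 1)]
    have hsr : rank s < rank r := not_le.mp hrs
    exact this (hps.trans hsr) (hqs.trans hsr) hsr.le
  have single_eq_zero {x w : σ} (h : rank x < rank w) : Finsupp.single x 1 w = 0 :=
    Finsupp.single_eq_of_ne fun hwx => h.ne (congrArg rank hwx.symm)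
  refine Or.inr ⟨by simp [Finsupp.sum_add_index'], s, ?_, fun w hw => ?_⟩
  · simp [single_eq_zero hps, single_eq_zero hqs]
  · simp [single_eq_zero hw, single_eq_zero (hps.trans hw), single_eq_zero (hqs.trans hw),
      single_eq_zero (hrs.trans_lt hw)]

theorem IsReducible.of_quadric {p q r s : σ} (hg : (X p * X q - X r * X s : MvPolynomial σ K) ∈ G)
    (hps : rank p < rank s) (hqs : rank q < rank s) (hpq : p ≠ q) (hp : 0 < d p) (hq : 0 < d q) :
    IsReducible (degRevLexLT rank) G d :=
  .of_binomial (by simpa [X, monomial_mul] using hg) (degRevLexLT_single_add_single hps hqs)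
    (add_single_one_le (Finsupp.single_le_iff.mpr hp) (Finsupp.single_eq_of_ne hpq.symm) hq)

theorem IsReducible.of_cubic {p q t r s : σ}
    (hg : (X p * X q * X t - X r * X s : MvPolynomial σ K) ∈ G)
    (hpq : p ≠ q) (hpt : p ≠ t) (hqt : q ≠ t) (hp : 0 < d p) (hq : 0 < d q) (ht : 0 < d t) :
    IsReducible (degRevLexLT rank) G d := by
  have hpq_le : Finsupp.single p 1 + Finsupp.single q 1 ≤ d :=
    add_single_one_le (Finsupp.single_le_iff.mpr hp) (Finsupp.single_eq_of_ne hpq.symm) hq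
  refine .of_binomial (by simpa [X, monomial_mul] using hg)
    (Or.inl (by simp [Finsupp.sum_add_index'])) (add_single_one_le hpq_le ?_ ht)
  simp [Finsupp.single_eq_of_ne hpt.symm, Finsupp.single_eq_of_ne hqt.symm]

end Reducible

section Toric

variable {σ τ R : Type*} [CommSemiring R]

/-- The toric map of the monomial configuration `a`, sending the variable `v` to the monomial with
exponent vector `a v`. Its fibres on monomials are the fibres of `Finsupp.weight a`. -/
noncomputable def toricMap (R : Type*) [CommSemiring R] (a : σ → τ →₀ ℕ) :
    MvPolynomial σ R →ₐ[R] MvPolynomial τ R :=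
  aeval fun v => monomial (a v) 1

theorem toricMap_monomial (a : σ → τ →₀ ℕ) (d : σ →₀ ℕ) (c : R) :
    toricMap R a (monomial d c) = monomial (Finsupp.weight a d) c := by
  have hprod : (d.prod fun v k => (monomial (a v) (1 : R)) ^ k) =
      monomial (Finsupp.weight a d) 1 := by
    simp only [monomial_pow, one_pow, Finsupp.weight_apply, Finsupp.sum, Finsupp.prod,
      monomial_sum_one]
  rw [toricMap, aeval_monomial, hprod, algebraMap_eq, C_mul_monomial, mul_one]

theorem exists_mem_support_weight_eq_of_toricMap_eq_zero {a : σ → τ →₀ ℕ} {f : MvPolynomial σ R}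
    (hf : toricMap R a f = 0) {d : σ →₀ ℕ} (hd : d ∈ f.support) :
    ∃ e ∈ f.support, e ≠ d ∧ Finsupp.weight a d = Finsupp.weight a e := by
  classical
  by_contra! hne
  have hcoeff : coeff (Finsupp.weight a d) (toricMap R a f) = coeff d f := by
    conv_lhs => rw [f.as_sum]
    rw [map_sum, coeff_sum, Finset.sum_eq_single d]
    · rw [toricMap_monomial, coeff_monomial, if_pos rfl]
    · intro e he hed
      rw [toricMap_monomial, coeff_monomial, if_neg (hne e he hed).symm]
    · exact fun h => absurd hd h
  rw [hf, coeff_zero] at hcoeff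
  exact mem_support_iff.mp hd hcoeff.symm

variable {K : Type*} [Field K]

theorem initialIdeal_ker_toricMap_eq_span {a : σ → τ →₀ ℕ}
    {lt : (σ →₀ ℕ) → (σ →₀ ℕ) → Prop} {G : Set (MvPolynomial σ K)}
    (hG : ∀ g ∈ G, toricMap K a g = 0)
    (hred : ∀ d e, Finsupp.weight a d = Finsupp.weight a e → lt e d → IsReducible lt G d) :
    initialIdeal lt (RingHom.ker (toricMap K a)) =
      Ideal.span {p | ∃ g ∈ G, ∃ d, IsLeadExp lt g d ∧ p = monomial d (1 : K)} := by
  apply le_antisymm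
  · refine Ideal.span_le.mpr ?_
    rintro p ⟨f, hf, _, d, ⟨hd, hlt⟩, rfl⟩
    obtain ⟨e, he, hed, hde⟩ := exists_mem_support_weight_eq_of_toricMap_eq_zero hf hd
    obtain ⟨g, hg, c, hcd, hc⟩ := hred d e hde (hlt e he hed)
    exact Ideal.mem_of_dvd _ (monomial_dvd_monomial.mpr ⟨Or.inr hcd, dvd_rfl⟩)
      (Ideal.subset_span ⟨g, hg, c, hc, rfl⟩)
  · refine Ideal.span_mono ?_
    rintro p ⟨g, hg, d, hd, rfl⟩
    exact ⟨g, hG g hg, support_nonempty.mp ⟨d, hd.1⟩, d, hd, rfl⟩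

end Toric

section Fibre

variable {m : ℕ}

/-- The exponent vectors of the monomials `π(v)`. -/
noncomputable def dExp (m : ℕ) : DVar m → ℕ →₀ ℕ
  | .x1 => Finsupp.single 1 2
  | .xn => Finsupp.single (2 * m) 2
  | .xJ t => Finsupp.single (2 * t.val + 3) 2
  | .xJc t => Finsupp.single (2 * t.val + 2) 1
  | .xP s t _ => Finsupp.single (2 * s.val + 3) 1 + Finsupp.single (2 * t.val + 3) 1
  | .y t => Finsupp.single (2 * t.val + 3) 1 + Finsupp.single 1 1 + Finsupp.single (2 * m) 1

theorem piD_eq_toricMap (K : Type*) [Field K] (m : ℕ) : piD K m = toricMap K (dExp m) := by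
  refine algHom_ext fun v => ?_
  rw [piD, toricMap, aeval_X, aeval_X]
  cases v <;> simp [dImage, dExp, X, monomial_pow, monomial_mul]

theorem dExp_apply_one (v : DVar m) :
    dExp m v 1 = match v with
      | .x1 => 2
      | .y _ => 1
      | _ => 0 := by
  cases v <;> grind [dExp, Finsupp.add_apply]

theorem dExp_apply_last (v : DVar m) :
    dExp m v (2 * m) = match v with
      | .xn => 2
      | .y _ => 1
      | _ => 0 := by
  cases v <;> grind [dExp, Finsupp.add_apply]

theorem dExp_apply_even (v : DVar m) (t : Fin (m - 1)) :
    dExp m v (2 * t.val + 2) = match v with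
      | .xJc s => if s = t then 1 else 0
      | _ => 0 := by
  cases v <;> grind [dExp, Finsupp.add_apply]

theorem dExp_apply_odd (v : DVar m) (t : Fin (m - 1)) :
    dExp m v (2 * t.val + 3) = match v with
      | .xJ s => if s = t then 2 else 0
      | .xP a b _ => (if a = t then 1 else 0) + if b = t then 1 else 0
      | .y s => if s = t then 1 else 0
      | _ => 0 := by
  cases v <;> grind [dExp, Finsupp.add_apply]

theorem eq_xJ_or_y_or_xP_of_dExp_pos {v : DVar m} {t : Fin (m - 1)}
    (h : 0 < dExp m v (2 * t.val + 3)) :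
    v = .xJ t ∨ v = .y t ∨ (∃ s hst, v = .xP s t hst) ∨ ∃ s hts, v = .xP t s hts := by
  rw [dExp_apply_odd] at h
  cases v <;> grind

/-- The weight counting the variables `y_t`, which are the only ones with an image of degree
three, all others having degree two once `u_j` with `j ∈ J^c` is counted twice. -/
def yWeight : DVar m → ℕ
  | .y _ => 1
  | _ => 0

theorem weight_dExp_apply_one (d : DVar m →₀ ℕ) :
    Finsupp.weight (dExp m) d 1 = 2 * d .x1 + Finsupp.weight yWeight d := by
  rw [weight_finsupp_apply]
  induction d using Finsupp.induction_linear with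
  | zero => simp
  | add f g hf hg => simp only [map_add, Finsupp.add_apply, hf, hg]; ring
  | single v k =>
    rw [Finsupp.weight_single, Finsupp.weight_single, dExp_apply_one]
    cases v <;> simp [yWeight, mul_comm]

theorem weight_dExp_apply_last (d : DVar m →₀ ℕ) :
    Finsupp.weight (dExp m) d (2 * m) = 2 * d .xn + Finsupp.weight yWeight d := by
  rw [weight_finsupp_apply]
  induction d using Finsupp.induction_linear with
  | zero => simp
  | add f g hf hg => simp only [map_add, Finsupp.add_apply, hf, hg]; ring
  | single v k =>
    rw [Finsupp.weight_single, Finsupp.weight_single, dExp_apply_last]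
    cases v <;> simp [yWeight, mul_comm]

theorem two_mul_degree_add_weight_yWeight (d : DVar m →₀ ℕ) :
    2 * d.degree + Finsupp.weight yWeight d =
      Finsupp.weight (dExp m) d 1 + Finsupp.weight (dExp m) d (2 * m) +
        2 * ∑ t : Fin (m - 1), Finsupp.weight (dExp m) d (2 * t.val + 2) +
        ∑ t : Fin (m - 1), Finsupp.weight (dExp m) d (2 * t.val + 3) := by
  induction d using Finsupp.induction_linear with
  | zero => simp
  | add f g hf hg =>
    simp only [map_add, Finsupp.add_apply, Finset.sum_add_distrib]
    linarith
  | single v k =>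
    simp only [Finsupp.degree_single, Finsupp.weight_single, Finsupp.smul_apply, dExp_apply_one,
      dExp_apply_last, dExp_apply_even, dExp_apply_odd, smul_eq_mul, ← Finset.mul_sum]
    cases v <;> simp [yWeight, Finset.sum_add_distrib] <;> ring

end Fibre

section Rank

variable {m : ℕ}

theorem rankD_lt_rankD_y {v : DVar m} (hv : yWeight v = 0) (t : Fin (m - 1)) :
    rankD m v < rankD m (.y t) := by
  have hm : 2 ≤ m := by have ht := t.isLt; omega
  have hsq : m ≤ m * m := Nat.le_mul_self m
  cases v with
  | x1 => simp only [rankD]; nlinarith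
  | xn => simp only [rankD]; nlinarith
  | xJ s => simp only [rankD]; nlinarith [s.isLt.trans_le (Nat.sub_le m 1)]
  | xJc s => simp only [rankD]; nlinarith [s.isLt.trans_le (Nat.sub_le m 1)]
  | xP a b _ =>
    have ha : a.val < m := a.isLt.trans_le (Nat.sub_le m 1)
    have hb : b.val * (2 * m) ≤ m * (2 * m) := Nat.mul_le_mul_right _ (by omega)
    simp only [rankD]
    nlinarith
  | y s => exact absurd hv one_ne_zero

theorem rankD_y_lt_rankD_y {s t : Fin (m - 1)} (h : s < t) : rankD m (.y s) < rankD m (.y t) :=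
  Nat.add_lt_add_left h _

theorem rankD_xJ_lt_rankD_xP (s : Fin (m - 1)) {a b : Fin (m - 1)} (hab : a < b) :
    rankD m (.xJ s) < rankD m (.xP a b hab) := by
  simp only [rankD]
  omega

theorem rankD_xP_lt_rankD_xP_of_snd_lt {a b c d : Fin (m - 1)} (hab : a < b) (hcd : c < d)
    (hbd : b < d) : rankD m (.xP a b hab) < rankD m (.xP c d hcd) := by
  have hmul : (b.val + 1) * (2 * m) ≤ d.val * (2 * m) := Nat.mul_le_mul_right _ hbd
  have ha : a.val < m := a.isLt.trans_le (Nat.sub_le m 1)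
  simp only [rankD]
  linarith

theorem rankD_xP_lt_rankD_xP_of_fst_lt {a b c : Fin (m - 1)} (hab : a < b) (hcb : c < b)
    (hac : a < c) : rankD m (.xP a b hab) < rankD m (.xP c b hcb) :=
  Nat.add_lt_add_left hac _

end Rank

section Divisors

variable (K : Type*) [Field K] {m : ℕ} {d : DVar m →₀ ℕ} {i j k l : Fin (m - 1)}

theorem isReducible_of_crossing_xP (hij : i < j) (hjk : j < k) (hkl : k < l)
    (hp : 0 < d (.xP i k (hij.trans hjk))) (hq : 0 < d (.xP j l (hjk.trans hkl))) :
    IsReducible (precEven m) (GD K m) d :=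
  .of_quadric (Or.inl ⟨i, j, k, l, hij, hjk, hkl, Or.inl rfl⟩)
    (rankD_xP_lt_rankD_xP_of_snd_lt _ _ hkl) (rankD_xP_lt_rankD_xP_of_fst_lt _ _ hjk)
    (by simp [hij.ne]) hp hq

theorem isReducible_of_nested_xP (hij : i < j) (hjk : j < k) (hkl : k < l)
    (hp : 0 < d (.xP i l (hij.trans (hjk.trans hkl)))) (hq : 0 < d (.xP j k hjk)) :
    IsReducible (precEven m) (GD K m) d :=
  .of_quadric (Or.inl ⟨i, j, k, l, hij, hjk, hkl, Or.inr rfl⟩)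
    (rankD_xP_lt_rankD_xP_of_fst_lt _ _ (hij.trans hjk)) (rankD_xP_lt_rankD_xP_of_snd_lt _ _ hkl)
    (by simp [hij.ne]) hp hq

theorem isReducible_of_xP_same_fst (hij : i < j) (hjk : j < k)
    (hp : 0 < d (.xP i j hij)) (hq : 0 < d (.xP i k (hij.trans hjk))) :
    IsReducible (precEven m) (GD K m) d :=
  .of_quadric (Or.inr (Or.inl ⟨i, j, k, hij, hjk, Or.inl rfl⟩))
    (rankD_xP_lt_rankD_xP_of_snd_lt _ _ hjk) (rankD_xP_lt_rankD_xP_of_fst_lt _ _ hij)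
    (by simp [hjk.ne]) hp hq

theorem isReducible_of_xJ_between_xP (hij : i < j) (hjk : j < k)
    (hp : 0 < d (.xJ j)) (hq : 0 < d (.xP i k (hij.trans hjk))) :
    IsReducible (precEven m) (GD K m) d :=
  .of_quadric (Or.inr (Or.inl ⟨i, j, k, hij, hjk, Or.inr (Or.inl rfl)⟩))
    (rankD_xJ_lt_rankD_xP _ _) (rankD_xP_lt_rankD_xP_of_fst_lt _ _ hij) (by simp) hp hq

theorem isReducible_of_xJ_above_xP (hij : i < j) (hjk : j < k)
    (hp : 0 < d (.xJ k)) (hq : 0 < d (.xP i j hij)) :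
    IsReducible (precEven m) (GD K m) d :=
  .of_quadric (Or.inr (Or.inl ⟨i, j, k, hij, hjk, Or.inr (Or.inr (Or.inl rfl))⟩))
    (rankD_xJ_lt_rankD_xP _ _) (rankD_xP_lt_rankD_xP_of_snd_lt _ _ hjk) (by simp) hp hq

theorem isReducible_of_xJ_xJ (hij : i < j) (hp : 0 < d (.xJ i)) (hq : 0 < d (.xJ j)) :
    IsReducible (precEven m) (GD K m) d :=
  .of_quadric (Or.inr (Or.inr (Or.inl ⟨i, j, hij, Or.inl (by rw [pow_two])⟩)))
    (rankD_xJ_lt_rankD_xP _ _) (rankD_xJ_lt_rankD_xP _ _) (by simp [hij.ne]) hp hq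

theorem isReducible_of_xJ_y (hij : i < j) (hp : 0 < d (.xJ j)) (hq : 0 < d (.y i)) :
    IsReducible (precEven m) (GD K m) d :=
  .of_quadric (Or.inr (Or.inr (Or.inl ⟨i, j, hij, Or.inr (Or.inl rfl)⟩)))
    (rankD_lt_rankD_y rfl _) (rankD_y_lt_rankD_y hij) (by simp) hp hq

theorem isReducible_of_xP_y (hij : i < j) (hkj : k < j)
    (hp : 0 < d (.xP i j hij)) (hq : 0 < d (.y k)) :
    IsReducible (precEven m) (GD K m) d := by
  rcases lt_trichotomy k i with hki | rfl | hik
  · exact .of_quadric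
      (Or.inr (Or.inl ⟨k, i, j, hki, hij, Or.inr (Or.inr (Or.inr (Or.inl rfl)))⟩))
      (rankD_lt_rankD_y rfl _) (rankD_y_lt_rankD_y hkj) (by simp) hp hq
  · exact .of_quadric (Or.inr (Or.inr (Or.inl ⟨k, j, hij, Or.inr (Or.inr (Or.inl rfl))⟩)))
      (rankD_lt_rankD_y rfl _) (rankD_y_lt_rankD_y hkj) (by simp) hp hq
  · exact .of_quadric
      (Or.inr (Or.inl ⟨i, k, j, hik, hkj, Or.inr (Or.inr (Or.inr (Or.inr rfl)))⟩))
      (rankD_lt_rankD_y rfl _) (rankD_y_lt_rankD_y hkj) (by simp) hp hq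

theorem isReducible_of_xP_x1_xn (hij : i < j) (hp : 0 < d (.xP i j hij))
    (hx1 : 0 < d .x1) (hxn : 0 < d .xn) : IsReducible (precEven m) (GD K m) d :=
  .of_cubic (Or.inr (Or.inr (Or.inl ⟨i, j, hij, Or.inr (Or.inr (Or.inr rfl))⟩)))
    (by simp) (by simp) (by simp) hp hx1 hxn

theorem isReducible_of_xJ_x1_xn (hp : 0 < d (.xJ i)) (hx1 : 0 < d .x1) (hxn : 0 < d .xn) :
    IsReducible (precEven m) (GD K m) d :=
  .of_cubic (Or.inr (Or.inr (Or.inr ⟨i, by rw [pow_two]⟩)))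
    (by simp) (by simp) (by simp) hp hx1 hxn

end Divisors

section Reduction

variable (K : Type*) [Field K] {m : ℕ} {d e : DVar m →₀ ℕ}
  (h : Finsupp.weight (dExp m) d = Finsupp.weight (dExp m) e)

include h

theorem weight_dExp_apply_congr (i : ℕ) :
    Finsupp.weight (fun v => dExp m v i) d = Finsupp.weight (fun v => dExp m v i) e := by
  rw [← weight_finsupp_apply, ← weight_finsupp_apply, h]

theorem two_mul_degree_add_weight_yWeight_congr :
    2 * d.degree + Finsupp.weight yWeight d = 2 * e.degree + Finsupp.weight yWeight e := by
  rw [two_mul_degree_add_weight_yWeight, two_mul_degree_add_weight_yWeight, h]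

theorem isReducible_of_degree_lt (hdeg : e.degree < d.degree) :
    IsReducible (precEven m) (GD K m) d := by
  have hy : Finsupp.weight yWeight d < Finsupp.weight yWeight e := by
    have hweight := two_mul_degree_add_weight_yWeight_congr h
    omega
  have hx1 : 0 < d .x1 := by
    have hd := weight_dExp_apply_one d
    rw [h, weight_dExp_apply_one] at hd
    omega
  have hxn : 0 < d .xn := by
    have hd := weight_dExp_apply_last d
    rw [h, weight_dExp_apply_last] at hd
    omega
  obtain ⟨t, hyt⟩ : ∃ t, d (.y t) < e (.y t) := by
    obtain ⟨v, hv, hpos⟩ := exists_lt_of_weight_lt hy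
    cases v with
    | y t => exact ⟨t, hv⟩
    | _ => exact absurd hpos (lt_irrefl 0)
  obtain ⟨u, hu, hut⟩ := exists_lt_of_weight_eq (weight_dExp_apply_congr h (2 * t.val + 3)) hyt
    (by simp [dExp_apply_odd])
  have hdu : 0 < d u := by omega
  rcases eq_xJ_or_y_or_xP_of_dExp_pos hut with rfl | rfl | ⟨s, hst, rfl⟩ | ⟨s, hts, rfl⟩
  · exact isReducible_of_xJ_x1_xn K hdu hx1 hxn
  · exact absurd hyt hu.not_gt
  · exact isReducible_of_xP_x1_xn K hst hdu hx1 hxn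
  · exact isReducible_of_xP_x1_xn K hts hdu hx1 hxn

theorem eq_xP_or_y_of_isRevLexPivot {v : DVar m} (hv : IsRevLexPivot (rankD m) d e v) :
    (∃ s t hst, v = .xP s t hst) ∨ ∃ t, v = .y t := by
  have exists_greater (i : ℕ) := hv.exists_ne_rank_le (weight_dExp_apply_congr h i)
  cases v with
  | x1 =>
    obtain ⟨u, hne, hrank, -, hu⟩ := exists_greater 1 (by simp [dExp_apply_one])
    rw [dExp_apply_one] at hu
    cases u with
    | x1 => exact absurd rfl hne
    | y t => exact absurd (rankD_lt_rankD_y rfl t) hrank.not_gt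
    | _ => exact absurd hu (lt_irrefl 0)
  | xn =>
    obtain ⟨u, hne, hrank, -, hu⟩ := exists_greater (2 * m) (by simp [dExp_apply_last])
    rw [dExp_apply_last] at hu
    cases u with
    | xn => exact absurd rfl hne
    | y t => exact absurd (rankD_lt_rankD_y rfl t) hrank.not_gt
    | _ => exact absurd hu (lt_irrefl 0)
  | xJ t =>
    obtain ⟨u, hne, hrank, -, hu⟩ := exists_greater (2 * t.val + 3) (by simp [dExp_apply_odd])
    rcases eq_xJ_or_y_or_xP_of_dExp_pos hu with rfl | rfl | ⟨s, hst, rfl⟩ | ⟨s, hts, rfl⟩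
    · exact absurd rfl hne
    · exact absurd (rankD_lt_rankD_y rfl t) hrank.not_gt
    · exact absurd (rankD_xJ_lt_rankD_xP t hst) hrank.not_gt
    · exact absurd (rankD_xJ_lt_rankD_xP t hts) hrank.not_gt
  | xJc t =>
    obtain ⟨u, hne, -, -, hu⟩ := exists_greater (2 * t.val + 2) (by simp [dExp_apply_even])
    rw [dExp_apply_even] at hu
    cases u <;> grind
  | xP s t hst => exact Or.inl ⟨s, t, hst, rfl⟩
  | y t => exact Or.inr ⟨t, rfl⟩

theorem exists_greater_of_xP_pivot_snd {s t : Fin (m - 1)} {hst : s < t}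
    (hv : IsRevLexPivot (rankD m) d e (.xP s t hst)) :
    0 < d (.xJ t) ∨ ∃ a hat, a < s ∧ 0 < d (.xP a t hat) := by
  obtain ⟨u, hne, hrank, hdu, hu⟩ := hv.exists_ne_rank_le
    (weight_dExp_apply_congr h (2 * t.val + 3)) (by simp [dExp_apply_odd])
  rcases eq_xJ_or_y_or_xP_of_dExp_pos hu with rfl | rfl | ⟨a, hat, rfl⟩ | ⟨b, htb, rfl⟩
  · exact Or.inl hdu
  · exact absurd (rankD_lt_rankD_y rfl t) hrank.not_gt
  · refine Or.inr ⟨a, hat, lt_of_le_of_ne ?_ ?_, hdu⟩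
    · by_contra! hsa
      exact (rankD_xP_lt_rankD_xP_of_fst_lt hst hat hsa).not_ge hrank
    · rintro rfl
      exact hne rfl
  · exact absurd (rankD_xP_lt_rankD_xP_of_snd_lt hst htb htb) hrank.not_gt

theorem exists_greater_of_xP_pivot_fst {s t : Fin (m - 1)} {hst : s < t}
    (hv : IsRevLexPivot (rankD m) d e (.xP s t hst)) :
    0 < d (.xJ s) ∨ (∃ a has, 0 < d (.xP a s has)) ∨ ∃ b hsb, b < t ∧ 0 < d (.xP s b hsb) := by
  obtain ⟨u, hne, hrank, hdu, hu⟩ := hv.exists_ne_rank_le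
    (weight_dExp_apply_congr h (2 * s.val + 3)) (by simp [dExp_apply_odd])
  rcases eq_xJ_or_y_or_xP_of_dExp_pos hu with rfl | rfl | ⟨a, has, rfl⟩ | ⟨b, hsb, rfl⟩
  · exact Or.inl hdu
  · exact absurd (rankD_lt_rankD_y rfl s) hrank.not_gt
  · exact Or.inr (Or.inl ⟨a, has, hdu⟩)
  · refine Or.inr (Or.inr ⟨b, hsb, lt_of_le_of_ne ?_ ?_, hdu⟩)
    · by_contra! htb
      exact (rankD_xP_lt_rankD_xP_of_snd_lt hst hsb htb).not_ge hrank
    · rintro rfl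
      exact hne rfl

theorem isReducible_of_xP_pivot {s t : Fin (m - 1)} {hst : s < t}
    (hv : IsRevLexPivot (rankD m) d e (.xP s t hst)) : IsReducible (precEven m) (GD K m) d := by
  rcases exists_greater_of_xP_pivot_snd h hv with htt | ⟨a, hat, has, hdat⟩ <;>
    rcases exists_greater_of_xP_pivot_fst h hv with hss | ⟨b, hbs, hdbs⟩ | ⟨b, hsb, hbt, hdsb⟩
  · exact isReducible_of_xJ_xJ K hst hss htt
  · exact isReducible_of_xJ_above_xP K hbs hst htt hdbs
  · exact isReducible_of_xJ_above_xP K hsb hbt htt hdsb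
  · exact isReducible_of_xJ_between_xP K has hst hss hdat
  · rcases lt_trichotomy a b with hab | rfl | hba
    · exact isReducible_of_nested_xP K hab hbs hst hdat hdbs
    · exact isReducible_of_xP_same_fst K hbs hst hdbs hdat
    · exact isReducible_of_crossing_xP K hba has hst hdbs hdat
  · exact isReducible_of_nested_xP K has hsb hbt hdat hdsb

theorem isReducible_of_y_pivot (hdeg : e.degree = d.degree) {t : Fin (m - 1)}
    (hv : IsRevLexPivot (rankD m) d e (.y t)) : IsReducible (precEven m) (GD K m) d := by
  have hy : Finsupp.weight yWeight d = Finsupp.weight yWeight e := by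
    have hweight := two_mul_degree_add_weight_yWeight_congr h
    omega
  obtain ⟨s, hs, hst⟩ : ∃ s, 0 < d (.y s) ∧ s < t := by
    obtain ⟨u, hne, hrank, hdu, hu⟩ := hv.exists_ne_rank_le hy Nat.one_pos
    cases u with
    | y s =>
      refine ⟨s, hdu, lt_of_le_of_ne ?_ (by rintro rfl; exact hne rfl)⟩
      by_contra! hts
      exact (rankD_y_lt_rankD_y hts).not_ge hrank
    | _ => exact absurd hu (lt_irrefl 0)
  obtain ⟨u, hne, -, hdu, hu⟩ := hv.exists_ne_rank_le
    (weight_dExp_apply_congr h (2 * t.val + 3)) (by simp [dExp_apply_odd])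
  rcases eq_xJ_or_y_or_xP_of_dExp_pos hu with rfl | rfl | ⟨a, hat, rfl⟩ | ⟨b, htb, rfl⟩
  · exact isReducible_of_xJ_y K hst hdu hs
  · exact absurd rfl hne
  · exact isReducible_of_xP_y K hat hst hdu hs
  · exact isReducible_of_xP_y K htb (hst.trans htb) hdu hs

theorem isReducible_of_precEven (hlt : precEven m e d) : IsReducible (precEven m) (GD K m) d := by
  rcases hlt with hdeg | ⟨hdeg, v, hv⟩
  · exact isReducible_of_degree_lt K h hdeg
  · rcases eq_xP_or_y_of_isRevLexPivot h hv with ⟨s, t, hst, rfl⟩ | ⟨t, rfl⟩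
    · exact isReducible_of_xP_pivot K h hv
    · exact isReducible_of_y_pivot K h hdeg hv

end Reduction

theorem piD_eq_zero_of_mem_GD {K : Type*} [Field K] {m : ℕ} {g : MvPolynomial (DVar m) K}
    (hg : g ∈ GD K m) : piD K m g = 0 := by
  rcases hg with ⟨i, j, k, l, hij, hjk, hkl, rfl | rfl⟩ |
    ⟨i, j, k, hij, hjk, rfl | rfl | rfl | rfl | rfl⟩ | ⟨i, j, hij, rfl | rfl | rfl | rfl⟩ |
    ⟨i, rfl⟩ <;>
  · simp only [piD, map_sub, map_mul, map_pow, aeval_X, dImage]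
    ring

/-- `𝒢_{D_{2m}}` is a Gröbner basis of `I_{D_{2m}}` with respect to `≻^even`:
the ideal generated by the `≻^even`-leading monomials of all nonzero elements of
`I_{D_{2m}}` equals the ideal generated by the `≻^even`-leading monomials of the elements
of `𝒢_{D_{2m}}`. -/
theorem GD_is_groebner (K : Type*) [Field K] (m : ℕ) (hm : 2 ≤ m) :
    initialIdeal (precEven m) (RingHom.ker (piD K m)) =
      Ideal.span {p : MvPolynomial (DVar m) K |
        ∃ g ∈ GD K m, ∃ d, IsLeadExp (precEven m) g d ∧ p = monomial d (1 : K)} := by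
  have hG : ∀ g ∈ GD K m, toricMap K (dExp m) g = 0 := fun g hg => by
    rw [← piD_eq_toricMap]
    exact piD_eq_zero_of_mem_GD hg
  rw [piD_eq_toricMap]
  exact initialIdeal_ker_toricMap_eq_span hG fun _ _ h hlt => isReducible_of_precEven K h hlt
end

section
/- The Krull dimension of the quotient ring R/I_{D_{2m}} (equivalently, of the semigroup ring K[ℕD_{2m}], the image of π) equals 2m; consequently the codimension of the toric variety V_{D_{2m}}, i.e. the number of variables of R minus this dimension, equals (m−1) + C(m−1,2). -/
open MvPolynomial

/-! The semigroup ring `K[ℕD_{2m}]`, the image of `π`, is a subring of `K[u_1, …, u_{2m}]`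
containing every square `u_i ^ 2`. So `K[u_1, …, u_{2m}]` is an integral extension of it, and
integral extensions preserve Krull dimension. -/

theorem ringKrullDim_eq_of_isIntegral (A B : Type*) [CommRing A] [CommRing B] [Algebra A B]
    [FaithfulSMul A B] [Algebra.IsIntegral A B] : ringKrullDim A = ringKrullDim B := by
  apply le_antisymm
  · refine iSup_le fun l ↦ ?_
    obtain ⟨Q, _, _⟩ := (inferInstance : Nonempty (l.head.asIdeal.primesOver B))
    obtain ⟨L, hL, -⟩ := Ideal.exists_ltSeries_of_hasGoingUp l Q
    exact hL ▸ Order.LTSeries.length_le_krullDim L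
  · exact Order.krullDim_le_of_strictMono (PrimeSpectrum.comap (algebraMap A B))
      fun _ _ hlt ↦ Ideal.IsIntegral.comap_lt_comap (R := A) hlt

section Subalgebra

variable {R B : Type*} [CommRing R] [CommRing B] [Algebra R B] {S T : Subalgebra R B}

theorem ringKrullDim_eq_of_le_of_isIntegral (hST : S ≤ T) (hint : ∀ x ∈ T, IsIntegral S x) :
    ringKrullDim S = ringKrullDim T := by
  let : Algebra S T := (Subalgebra.inclusion hST).toAlgebra
  have : IsScalarTower S T B := .of_algebraMap_eq fun _ ↦ rfl
  have : FaithfulSMul S T :=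
    (faithfulSMul_iff_algebraMap_injective S T).2 (Subalgebra.inclusion_injective hST)
  have : Algebra.IsIntegral S T :=
    ⟨fun x ↦ (isIntegral_algebraMap_iff (B := B) Subtype.val_injective).1 (hint x x.2)⟩
  exact ringKrullDim_eq_of_isIntegral S T

theorem isIntegral_of_mem_adjoin {s : Set B} (hs : ∀ x ∈ s, IsIntegral S x) {x : B}
    (hx : x ∈ Algebra.adjoin R s) : IsIntegral S x := by
  have hle : Algebra.adjoin R s ≤ (integralClosure S B).restrictScalars R := Algebra.adjoin_le hs
  exact hle hx

theorem isIntegral_of_pow_mem {x : B} {n : ℕ} (hn : 0 < n) (hx : x ^ n ∈ S) : IsIntegral S x :=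
  .of_pow hn (isIntegral_algebraMap (x := (⟨x ^ n, hx⟩ : S)))

end Subalgebra

section Supported

variable {σ R : Type*} [CommRing R] {s : Set σ}

theorem ringKrullDim_supported [IsNoetherianRing R] (hs : s.Finite) :
    ringKrullDim (supported R s) = ringKrullDim R + s.ncard := by
  have := hs.to_subtype
  rw [ringKrullDim_eq_of_ringEquiv (supportedEquivMvPolynomial s).toRingEquiv,
    MvPolynomial.ringKrullDim_of_isNoetherianRing, Nat.card_coe_set_eq]

theorem ringKrullDim_eq_of_le_supported [IsNoetherianRing R] {S : Subalgebra R (MvPolynomial σ R)}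
    (hs : s.Finite) (hS : S ≤ supported R s)
    (hX : ∀ i ∈ s, IsIntegral S (X i : MvPolynomial σ R)) :
    ringKrullDim S = ringKrullDim R + s.ncard := by
  rw [ringKrullDim_eq_of_le_of_isIntegral hS fun _ ↦
      isIntegral_of_mem_adjoin (Set.forall_mem_image.2 hX),
    ringKrullDim_supported hs]

end Supported

theorem natCard_subtype_fst_lt_snd (α : Type*) [LinearOrder α] :
    Nat.card {p : α × α // p.1 < p.2} = (Nat.card α).choose 2 := by
  rw [← Sym2.natCard_subtype_not_diag]
  have not_isDiag_iff (a : Sym2 α) : ¬a.IsDiag ↔ (Sym2.sortEquiv a).1.1 < (Sym2.sortEquiv a).1.2 :=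
    a.ind fun _ _ ↦ by simpa using ne_comm
  exact Nat.card_congr <| .symm <| (Sym2.sortEquiv.subtypeEquiv not_isDiag_iff).trans <|
    Equiv.subtypeSubtypeEquivSubtype le_of_lt

/-- The variables of `R` sorted by kind: `x_1` and `x_n`, then the families `x_i`, `x_j` and `y_i`,
each indexed by `Fin (m - 1)`, and finally the `x_{k,ℓ}`, indexed by ordered pairs. -/
def DVar.equivSum (m : ℕ) :
    DVar m ≃ (Unit ⊕ Unit) ⊕ (Fin (m - 1) ⊕ Fin (m - 1) ⊕ Fin (m - 1)) ⊕
      {p : Fin (m - 1) × Fin (m - 1) // p.1 < p.2} where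
  toFun
    | .x1 => .inl (.inl ())
    | .xn => .inl (.inr ())
    | .xJ t => .inr (.inl (.inl t))
    | .xJc t => .inr (.inl (.inr (.inl t)))
    | .y t => .inr (.inl (.inr (.inr t)))
    | .xP s t h => .inr (.inr ⟨(s, t), h⟩)
  invFun
    | .inl (.inl ()) => .x1
    | .inl (.inr ()) => .xn
    | .inr (.inl (.inl t)) => .xJ t
    | .inr (.inl (.inr (.inl t))) => .xJc t
    | .inr (.inl (.inr (.inr t))) => .y t
    | .inr (.inr ⟨(s, t), h⟩) => .xP s t h
  left_inv := by rintro (_ | _ | _ | _ | _ | _) <;> rfl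
  right_inv := by rintro ((_ | _) | (_ | _ | _) | _) <;> rfl

theorem natCard_DVar (m : ℕ) : Nat.card (DVar m) = 2 + 3 * (m - 1) + (m - 1).choose 2 := by
  rw [Nat.card_congr (DVar.equivSum m)]
  simp only [Nat.card_sum, Nat.card_unique, Nat.card_fin, natCard_subtype_fst_lt_snd]
  ring

section Image

variable (K : Type*) [Field K] {m : ℕ}

theorem dImage_mem_supported (hm : 0 < m) (v : DVar m) :
    dImage K m v ∈ supported K (Set.Icc 1 (2 * m)) := by
  have hX {i : ℕ} (h₁ : 1 ≤ i) (h₂ : i ≤ 2 * m) : X i ∈ supported K (Set.Icc 1 (2 * m)) :=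
    X_mem_supported.2 ⟨h₁, h₂⟩
  have hX₁ := hX le_rfl (by lia)
  have hXn := hX (i := 2 * m) (by lia) le_rfl
  have hXJ (t : Fin (m - 1)) := hX (i := 2 * t.val + 3) (by lia) (by lia)
  cases v with
  | x1 => exact pow_mem hX₁ 2
  | xn => exact pow_mem hXn 2
  | xJ t => exact pow_mem (hXJ t) 2
  | xJc t => exact hX (by lia) (by lia)
  | xP s t _ => exact mul_mem (hXJ s) (hXJ t)
  | y t => exact mul_mem (mul_mem (hXJ t) hX₁) hXn

theorem range_piD_le_supported (hm : 0 < m) :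
    (piD K m).range ≤ supported K (Set.Icc 1 (2 * m)) := by
  rw [piD, aeval_range, Algebra.adjoin_le_iff, Set.range_subset_iff]
  exact dImage_mem_supported K hm

theorem dImage_mem_range_piD (v : DVar m) : dImage K m v ∈ (piD K m).range :=
  ⟨X v, aeval_X _ _⟩

theorem X_sq_mem_range_piD {i : ℕ} (hi : i ∈ Set.Icc 1 (2 * m)) :
    X i ^ 2 ∈ (piD K m).range := by
  obtain ⟨h₁, h₂⟩ := hi
  obtain rfl | hi₁ := eq_or_ne i 1
  · exact dImage_mem_range_piD K .x1
  obtain rfl | hin := eq_or_ne i (2 * m)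
  · exact dImage_mem_range_piD K .xn
  obtain ⟨t, rfl | rfl⟩ : ∃ t, i = 2 * t + 2 ∨ i = 2 * t + 3 := ⟨(i - 2) / 2, by lia⟩
  · exact pow_mem (dImage_mem_range_piD K (.xJc ⟨t, by lia⟩)) 2
  · exact dImage_mem_range_piD K (.xJ ⟨t, by lia⟩)

theorem ringKrullDim_range_piD (hm : 0 < m) : ringKrullDim (piD K m).range = (2 * m : ℕ) := by
  rw [ringKrullDim_eq_of_le_supported (Set.finite_Icc 1 (2 * m)) (range_piD_le_supported K hm)
    fun i hi ↦ isIntegral_of_pow_mem two_pos (X_sq_mem_range_piD K hi),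
    ringKrullDim_eq_zero_of_field, zero_add, ← Finset.coe_Icc, Set.ncard_coe_finset,
    Nat.card_Icc, Nat.add_sub_cancel]

end Image

/-- the Krull dimension of `R/I_{D_{2m}}` equals `2m`, and consequently the
codimension of the toric variety `V_{D_{2m}}`, i.e. the number of variables of `R` minus
this dimension, equals `(m−1) + C(m−1,2)`. -/
theorem dim_VD (K : Type*) [Field K] (m : ℕ) (hm : 2 ≤ m) :
    ringKrullDim (MvPolynomial (DVar m) K ⧸ RingHom.ker (piD K m)) = (2 * m : ℕ) ∧
      Nat.card (DVar m) - 2 * m = (m - 1) + Nat.choose (m - 1) 2 := by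
  constructor
  · rw [ringKrullDim_eq_of_ringEquiv (Ideal.quotientKerEquivRange (piD K m)).toRingEquiv,
      ringKrullDim_range_piD K (by lia)]
  · rw [natCard_DVar]
    lia
end

section
/- The ideal of R generated by the set 𝒢_{D_{2m+1}} equals the toric ideal I_{D_{2m+1}} = ker π. -/
open MvPolynomial

/-- Index type for the variables of the polynomial ring `R` in the `D_{2m+1}` case
(`n = 2m+1`).  The set `J = {2,4,…,n-1}` of even integers is realised as
`{2t+2 | t : Fin m}` and `J^c = {3,5,…,n-2}` as `{2t+3 | t : Fin (m-1)}`.  The constructors: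
`x1 ↦ x_1`, `xn ↦ x_n`, `xJ t ↦ x_{2t+2}` (`2t+2 ∈ J`), `xJc t ↦ x_{2t+3}` (`2t+3 ∈ J^c`),
`xP s t _ ↦ x_{2s+2,2t+2}` (a pair `k < ℓ` in `J`), `x1n ↦ x_{1,n}`,
`xK1 t ↦ x_{2t+2,1}`, `xKn t ↦ x_{2t+2,n}`, `yK1 t ↦ y_{2t+2,1}`, `yKn t ↦ y_{2t+2,n}`. -/
inductive DoVar (m : ℕ) : Type where
  | x1 : DoVar m
  | xn : DoVar m
  | xJ : Fin m → DoVar m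
  | xJc : Fin (m - 1) → DoVar m
  | xP : (s t : Fin m) → s < t → DoVar m
  | x1n : DoVar m
  | xK1 : Fin m → DoVar m
  | xKn : Fin m → DoVar m
  | yK1 : Fin m → DoVar m
  | yKn : Fin m → DoVar m

/-- The images of the variables under `π`, where `u_i = X i` inside
`K[u_1,…,u_n] ⊆ MvPolynomial ℕ K` and `n = 2m+1`:
`π(x_i) = u_i²` (`i ∈ J`), `π(x_j) = u_j` (`j ∈ J^c`), `π(x_1) = u_1⁴`, `π(x_n) = u_n⁴`,
`π(x_{k,ℓ}) = u_k u_ℓ` (`k < ℓ` in `J`), `π(x_{1,n}) = u_1 u_n`, `π(x_{i,1}) = u_i u_1²`,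
`π(x_{i,n}) = u_i u_n²`, `π(y_{i,1}) = u_i u_1³ u_n`, `π(y_{i,n}) = u_i u_1 u_n³`. -/
noncomputable def doImage (K : Type*) [Field K] (m : ℕ) : DoVar m → MvPolynomial ℕ K
  | .x1 => X 1 ^ 4
  | .xn => X (2 * m + 1) ^ 4
  | .xJ t => X (2 * t.val + 2) ^ 2
  | .xJc t => X (2 * t.val + 3)
  | .xP s t _ => X (2 * s.val + 2) * X (2 * t.val + 2)
  | .x1n => X 1 * X (2 * m + 1)
  | .xK1 t => X (2 * t.val + 2) * X 1 ^ 2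
  | .xKn t => X (2 * t.val + 2) * X (2 * m + 1) ^ 2
  | .yK1 t => X (2 * t.val + 2) * X 1 ^ 3 * X (2 * m + 1)
  | .yKn t => X (2 * t.val + 2) * X 1 * X (2 * m + 1) ^ 3

/-- The toric map `π : R → K[u_1,…,u_n]` for the `D_{2m+1}` configuration. -/
noncomputable def piDo (K : Type*) [Field K] (m : ℕ) :
    MvPolynomial (DoVar m) K →ₐ[K] MvPolynomial ℕ K :=
  aeval (doImage K m)

/-- The set `𝒢_{D_{2m+1}}` of binomials. -/
noncomputable def GDo (K : Type*) [Field K] (m : ℕ) : Set (MvPolynomial (DoVar m) K) :=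
  {g | (∃ (i j k l : Fin m) (hij : i < j) (hjk : j < k) (hkl : k < l),
          g = X (DoVar.xP i k (hij.trans hjk)) * X (DoVar.xP j l (hjk.trans hkl))
              - X (DoVar.xP i j hij) * X (DoVar.xP k l hkl) ∨
          g = X (DoVar.xP i l (hij.trans (hjk.trans hkl))) * X (DoVar.xP j k hjk)
              - X (DoVar.xP i j hij) * X (DoVar.xP k l hkl)) ∨
      (∃ (i j k : Fin m) (hij : i < j) (hjk : j < k),
          g = X (DoVar.xP j k hjk) * X (DoVar.xK1 i)
              - X (DoVar.xP i j hij) * X (DoVar.xK1 k) ∨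
          g = X (DoVar.xP i k (hij.trans hjk)) * X (DoVar.xK1 j)
              - X (DoVar.xP i j hij) * X (DoVar.xK1 k) ∨
          g = X (DoVar.xP j k hjk) * X (DoVar.xKn i)
              - X (DoVar.xP i j hij) * X (DoVar.xKn k) ∨
          g = X (DoVar.xP i k (hij.trans hjk)) * X (DoVar.xKn j)
              - X (DoVar.xP i j hij) * X (DoVar.xKn k) ∨
          g = X (DoVar.xJ j) * X (DoVar.xP i k (hij.trans hjk))
              - X (DoVar.xP i j hij) * X (DoVar.xP j k hjk) ∨
          g = X (DoVar.xP i j hij) * X (DoVar.xP i k (hij.trans hjk))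
              - X (DoVar.xJ i) * X (DoVar.xP j k hjk) ∨
          g = X (DoVar.xJ k) * X (DoVar.xP i j hij)
              - X (DoVar.xP i k (hij.trans hjk)) * X (DoVar.xP j k hjk)) ∨
      (∃ (i j : Fin m) (hij : i < j),
          g = X (DoVar.xJ i) * X (DoVar.xJ j) - X (DoVar.xP i j hij) ^ 2 ∨
          g = X (DoVar.xP i j hij) * X DoVar.x1 - X (DoVar.xK1 i) * X (DoVar.xK1 j) ∨
          g = X (DoVar.xP i j hij) * X DoVar.xn - X (DoVar.xKn i) * X (DoVar.xKn j) ∨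
          g = X (DoVar.xP i j hij) * X (DoVar.xK1 i) - X (DoVar.xJ i) * X (DoVar.xK1 j) ∨
          g = X (DoVar.xP i j hij) * X (DoVar.xKn i) - X (DoVar.xJ i) * X (DoVar.xKn j) ∨
          g = X (DoVar.xJ j) * X (DoVar.xK1 i) - X (DoVar.xP i j hij) * X (DoVar.xK1 j) ∨
          g = X (DoVar.xJ j) * X (DoVar.xKn i) - X (DoVar.xP i j hij) * X (DoVar.xKn j) ∨
          g = X (DoVar.xK1 j) * X (DoVar.xKn i) - X (DoVar.xK1 i) * X (DoVar.xKn j) ∨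
          g = X (DoVar.xK1 i) * X (DoVar.xKn j) - X DoVar.x1n ^ 2 * X (DoVar.xP i j hij)) ∨
      (∃ i : Fin m,
          g = X (DoVar.xJ i) * X DoVar.x1 - X (DoVar.xK1 i) ^ 2 ∨
          g = X (DoVar.xJ i) * X DoVar.xn - X (DoVar.xKn i) ^ 2 ∨
          g = X (DoVar.xK1 i) * X (DoVar.xKn i) - X DoVar.x1n ^ 2 * X (DoVar.xJ i) ∨
          g = X (DoVar.xKn i) * X DoVar.x1 - X DoVar.x1n ^ 2 * X (DoVar.xK1 i) ∨
          g = X (DoVar.yK1 i) - X DoVar.x1n * X (DoVar.xK1 i) ∨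
          g = X (DoVar.yKn i) - X DoVar.x1n * X (DoVar.xKn i) ∨
          g = X (DoVar.xK1 i) * X DoVar.xn - X DoVar.x1n ^ 2 * X (DoVar.xKn i)) ∨
      g = X DoVar.x1 * X DoVar.xn - X DoVar.x1n ^ 4}

/-!
Put `v_t = u_{2t+2}`, `v_one = u_1²`, `v_last = u_n²`, ordered as listed, and write the product
`v_one * v_last` as `x_{1,n}²`. Apart from the relations defining the `y_{i,1}` and `y_{i,n}`, the
set `𝒢` then consists of the relations
`(v_a v_c)(v_b v_d) = (v_a v_b)(v_c v_d) = (v_a v_d)(v_b v_c)`, `a ≤ b ≤ c ≤ d`, of the second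
Veronese ring in the variables `v`. Modulo `𝒢` a product of factors `v_a v_b` therefore depends only
on the multiset of all the indices that occur in it, not on the way they are paired up. So a value
in `R / ⟨𝒢⟩` can be attached to each monomial in the `u_i`, compatibly with multiplication by the
images of the variables; its linear extension takes `π f` to the class of `f`, whence `ker π ≤ ⟨𝒢⟩`.
-/

/-- A symmetric matrix whose `2 × 2` minors all vanish, such as `w a b = v a * v b`: the relations
of the second Veronese subring of a polynomial ring with variables `v a`. -/
structure SymmExchange {V Q : Type*} [Mul Q] (w : V → V → Q) : Prop where
  symm : ∀ a b, w a b = w b a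
  exchange : ∀ a b c d, w a b * w c d = w a c * w b d

/-- The three ways of pairing up `a, b, c, d` have the same `w`-product. -/
def PairingsAgree {V Q : Type*} [Mul Q] (w : V → V → Q) (a b c d : V) : Prop :=
  w a c * w b d = w a b * w c d ∧ w a d * w b c = w a b * w c d

namespace PairingsAgree

variable {V Q : Type*} [CommMagma Q] {w : V → V → Q} {a b c d : V}

theorem swap_left (symm : ∀ a b, w a b = w b a) (h : PairingsAgree w a b c d) :
    PairingsAgree w b a c d := by
  rw [PairingsAgree, symm b a, mul_comm (w b c), mul_comm (w b d)]
  exact h.symm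

theorem swap_middle (symm : ∀ a b, w a b = w b a) (h : PairingsAgree w a b c d) :
    PairingsAgree w a c b d := by
  rw [PairingsAgree, symm c b]
  exact ⟨h.1.symm, h.2.trans h.1.symm⟩

theorem swap_right (symm : ∀ a b, w a b = w b a) (h : PairingsAgree w a b c d) :
    PairingsAgree w a b d c := by
  rw [PairingsAgree, symm d c]
  exact h.symm

end PairingsAgree

namespace SymmExchange

section Sorted

variable {V Q : Type*} [LinearOrder V] {w : V → V → Q}

theorem of_pairingsAgree_of_le [CommMagma Q] (symm : ∀ a b, w a b = w b a)
    (sorted : ∀ a b c d, a ≤ b → b ≤ c → c ≤ d → PairingsAgree w a b c d) :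
    SymmExchange w := by
  have sorted_tail : ∀ a b c d, b ≤ c → c ≤ d → PairingsAgree w a b c d := by
    intro a b c d hbc hcd
    rcases le_total a b with hab | hba
    · exact sorted a b c d hab hbc hcd
    rcases le_total a c with hac | hca
    · exact (sorted b a c d hba hac hcd).swap_left symm
    rcases le_total a d with had | hda
    · exact ((sorted b c a d hbc hca had).swap_middle symm).swap_left symm
    · exact (((sorted b c d a hbc hcd hda).swap_right symm).swap_middle symm).swap_left symm
  have sorted_pair : ∀ a b c d, c ≤ d → PairingsAgree w a b c d := by
    intro a b c d hcd
    rcases le_total b c with hbc | hcb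
    · exact sorted_tail a b c d hbc hcd
    rcases le_total b d with hbd | hdb
    · exact (sorted_tail a c b d hcb hbd).swap_middle symm
    · exact ((sorted_tail a c d b hcd hdb).swap_right symm).swap_middle symm
  have all : ∀ a b c d, PairingsAgree w a b c d := by
    intro a b c d
    rcases le_total c d with hcd | hdc
    · exact sorted_pair a b c d hcd
    · exact (sorted_pair a b d c hdc).swap_right symm
  exact ⟨symm, fun a b c d => (all a b c d).1.symm⟩

theorem of_lt [CommMonoid Q] (symm : ∀ a b, w a b = w b a)
    (four : ∀ a b c d, a < b → b < c → c < d → PairingsAgree w a b c d)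
    (three : ∀ a b c, a < b → b < c →
      w b b * w a c = w a b * w b c ∧ w a b * w a c = w a a * w b c ∧
        w c c * w a b = w a c * w b c)
    (two : ∀ a b, a < b → w a a * w b b = w a b * w a b) :
    SymmExchange w := by
  refine of_pairingsAgree_of_le symm fun a b c d hab hbc hcd => ?_
  rcases hab.eq_or_lt with rfl | hab <;> rcases hbc.eq_or_lt with rfl | hbc <;>
    rcases hcd.eq_or_lt with rfl | hcd
  · exact ⟨rfl, rfl⟩
  · exact ⟨rfl, mul_comm _ _⟩
  · exact ⟨(two _ _ hbc).symm, (two _ _ hbc).symm⟩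
  · have h := (three _ _ _ hbc hcd).2.1
    exact ⟨h, (mul_comm _ _).trans h⟩
  · exact ⟨rfl, rfl⟩
  · exact ⟨rfl, (mul_comm _ _).trans (three _ _ _ hab hcd).1⟩
  · have h := (three _ _ _ hab hbc).2.2.symm.trans (mul_comm _ _)
    exact ⟨h, h⟩
  · exact four a b c d hab hbc hcd

end Sorted

end SymmExchange

/-- The product of `w` over consecutive pairs of a list, with value `0` on lists of odd length. -/
def consecutivePairProd {V Q : Type*} [MonoidWithZero Q] (w : V → V → Q) : List V → Q
  | [] => 1
  | [_] => 0
  | a :: b :: l => w a b * consecutivePairProd w l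

namespace SymmExchange

variable {V Q : Type*}

section PairProd

variable [MonoidWithZero Q] {w : V → V → Q}

-- Removing a common head shifts the pairing by one, so both parities have to be carried along.
theorem consecutivePairProd_perm (hw : SymmExchange w) {l₁ l₂ : List V} (h : l₁.Perm l₂) :
    (∀ c, consecutivePairProd w (c :: l₁) = consecutivePairProd w (c :: l₂)) ∧
      consecutivePairProd w l₁ = consecutivePairProd w l₂ := by
  induction h with
  | nil => simp
  | cons a _ ih => exact ⟨fun c => by simp only [consecutivePairProd, ih.2], ih.1 a⟩
  | swap a b l =>
    refine ⟨fun c => ?_, by simp only [consecutivePairProd, hw.symm b a]⟩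
    cases l with
    | nil => simp only [consecutivePairProd, hw.symm, mul_zero]
    | cons d l => simp only [consecutivePairProd, ← mul_assoc, hw.exchange c b a d]
  | trans _ _ ih₁ ih₂ => exact ⟨fun c => (ih₁.1 c).trans (ih₂.1 c), ih₁.2.trans ih₂.2⟩

/-- The product of `w` over an arbitrary pairing of the elements of a multiset, with value `0` on
multisets of odd cardinality. -/
def pairProd (hw : SymmExchange w) : Multiset V → Q :=
  Quotient.lift (consecutivePairProd w) fun _ _ h => (hw.consecutivePairProd_perm h).2

theorem pairProd_zero (hw : SymmExchange w) : hw.pairProd 0 = 1 := rfl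

theorem pairProd_cons_cons (hw : SymmExchange w) (a b : V) (M : Multiset V) :
    hw.pairProd (a ::ₘ b ::ₘ M) = w a b * hw.pairProd M :=
  Quotient.inductionOn M fun _ => rfl

end PairProd

section MixedProd

variable [CommSemiring Q] {w : V → V → Q}

/-- The value of a monomial `(∏ a ∈ M, v a) * x ^ α * y ^ β` when only the values `w a b` of
`v a * v b` and `p` of `x * y` are known, with `x ^ 2 = v s` and `y ^ 2 = v t`. Monomials that are
not products of such factors get the value `0`. -/
def mixedProd (hw : SymmExchange w) (s t : V) (p : Q) (M : Multiset V) (α β : ℕ) : Q :=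
  if α % 2 = β % 2 then
    p ^ (α % 2) * hw.pairProd (M + Multiset.replicate (α / 2) s + Multiset.replicate (β / 2) t)
  else 0

theorem mixedProd_zero (hw : SymmExchange w) (s t : V) (p : Q) : hw.mixedProd s t p 0 0 0 = 1 := by
  simp [mixedProd, pairProd_zero]

theorem mixedProd_cons_cons (hw : SymmExchange w) (s t : V) (p : Q) (a b : V) (M : Multiset V)
    (α β : ℕ) : hw.mixedProd s t p (a ::ₘ b ::ₘ M) α β = w a b * hw.mixedProd s t p M α β := by
  simp only [mixedProd, Multiset.cons_add, pairProd_cons_cons, mul_ite, mul_zero, mul_left_comm]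

theorem mixedProd_add_two_left (hw : SymmExchange w) (s t : V) (p : Q) (M : Multiset V)
    (α β : ℕ) : hw.mixedProd s t p M (α + 2) β = hw.mixedProd s t p (s ::ₘ M) α β := by
  simp only [mixedProd, Nat.add_mod_right, Nat.add_div_right _ two_pos, Multiset.replicate_succ,
    Multiset.add_cons, Multiset.cons_add]

theorem mixedProd_add_two_right (hw : SymmExchange w) (s t : V) (p : Q) (M : Multiset V)
    (α β : ℕ) : hw.mixedProd s t p M α (β + 2) = hw.mixedProd s t p (t ::ₘ M) α β := by
  simp only [mixedProd, Nat.add_mod_right, Nat.add_div_right _ two_pos, Multiset.replicate_succ,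
    Multiset.add_cons, Multiset.cons_add]

theorem mixedProd_succ_succ (hw : SymmExchange w) {s t : V} {p : Q} (hp : w s t = p ^ 2)
    (M : Multiset V) (α β : ℕ) :
    hw.mixedProd s t p M (α + 1) (β + 1) = p * hw.mixedProd s t p M α β := by
  have even_even : ∀ (M : Multiset V) (a b : ℕ),
      hw.mixedProd s t p M (2 * a + 1) (2 * b + 1) = p * hw.mixedProd s t p M (2 * a) (2 * b) := by
    intro M a b
    simp [mixedProd, Nat.mul_add_div]
  by_cases h : α % 2 = β % 2
  · rcases Nat.even_or_odd' α with ⟨a, rfl | rfl⟩ <;> rcases Nat.even_or_odd' β with ⟨b, rfl | rfl⟩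
    · exact even_even M a b
    · omega
    · omega
    · rw [even_even, mixedProd_add_two_left, mixedProd_add_two_right, Multiset.cons_swap,
        mixedProd_cons_cons, hp, sq, mul_assoc]
  · rw [mixedProd, mixedProd, if_neg h, if_neg (by omega), mul_zero]

end MixedProd

end SymmExchange

section MonomialMap

variable {σ τ K Q : Type*} [CommSemiring Q] {e : σ → τ →₀ ℕ} {g : σ → Q} {N : (τ →₀ ℕ) → Q}

theorem aeval_monomial_monomial [CommSemiring K] (e : σ → τ →₀ ℕ) (s : σ →₀ ℕ) :
    aeval (fun v => monomial (e v) (1 : K)) (monomial s (1 : K)) =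
      monomial (s.sum fun v k => k • e v) 1 := by
  rw [aeval_monomial, monomial_finsupp_sum_index]
  simp only [map_one, one_mul, monomial_pow, one_pow]

theorem apply_sum_smul_eq_prod_pow (h0 : N 0 = 1) (hN : ∀ v d, N (d + e v) = g v * N d)
    (s : σ →₀ ℕ) : N (s.sum fun v k => k • e v) = s.prod fun v k => g v ^ k := by
  have apply_add_smul : ∀ (k : ℕ) v d, N (d + k • e v) = g v ^ k * N d := by
    intro k v d
    induction k with
    | zero => simp
    | succ k ih => rw [succ_nsmul, ← add_assoc, hN, ih, pow_succ', mul_assoc]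
  induction s using Finsupp.induction with
  | zero => simpa using h0
  | single_add v k s _ _ ih =>
    rw [Finsupp.sum_add_index', Finsupp.prod_add_index', add_comm, Finsupp.sum_single_index,
      Finsupp.prod_single_index, apply_add_smul, ih] <;> simp [add_smul, pow_add]

-- The `K`-linear extension of `N` carries the image of each `f` to `aeval g f`.
theorem ker_aeval_monomial_le [CommSemiring K] [Algebra K Q] (h0 : N 0 = 1)
    (hN : ∀ v d, N (d + e v) = g v * N d) :
    RingHom.ker (aeval fun v => monomial (e v) (1 : K)) ≤
      RingHom.ker (aeval g : MvPolynomial σ K →ₐ[K] Q) := by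
  let L : MvPolynomial τ K →ₗ[K] Q := (basisMonomials τ K).constr K N
  have L_monomial : ∀ d, L (monomial d 1) = N d := fun d => by
    simpa using (basisMonomials τ K).constr_basis K N d
  have factor : L ∘ₗ (aeval fun v => monomial (e v) (1 : K)).toLinearMap =
      (aeval g : MvPolynomial σ K →ₐ[K] Q).toLinearMap := by
    refine (basisMonomials σ K).ext fun s => ?_
    rw [coe_basisMonomials, LinearMap.comp_apply, AlgHom.toLinearMap_apply,
      AlgHom.toLinearMap_apply, aeval_monomial_monomial, L_monomial,
      apply_sum_smul_eq_prod_pow h0 hN, aeval_monomial, map_one, one_mul]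
  intro f hf
  rw [RingHom.mem_ker] at hf ⊢
  calc aeval g f = L (aeval (fun v => monomial (e v) (1 : K)) f) :=
        (LinearMap.congr_fun factor f).symm
    _ = 0 := by rw [hf, map_zero]

end MonomialMap


/-- The variables of the second Veronese ring behind `D_{2m+1}`, in increasing order: `even t`
stands for `u_{2t+2}`, `one` for `u_1²` and `last` for `u_n²`. -/
inductive VeroneseVar (m : ℕ) : Type where
  | even (t : Fin m) : VeroneseVar m
  | one : VeroneseVar m
  | last : VeroneseVar m

namespace VeroneseVar

variable {m : ℕ}

/-- The position of a variable in the linear order on `VeroneseVar m`. -/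
def rank : VeroneseVar m → ℕ
  | even t => t
  | one => m
  | last => m + 1

theorem rank_injective : Function.Injective (rank (m := m)) := by
  rintro (s | _ | _) (t | _ | _) h <;> simp only [rank] at h <;> grind

instance : LinearOrder (VeroneseVar m) := LinearOrder.lift' rank rank_injective

theorem lt_cases {a b : VeroneseVar m} (h : a < b) :
    (∃ s t, s < t ∧ a = even s ∧ b = even t) ∨ (∃ s, a = even s ∧ b = one) ∨
      (∃ s, a = even s ∧ b = last) ∨ (a = one ∧ b = last) := by
  change rank a < rank b at h
  rcases a with s | _ | _ <;> rcases b with t | _ | _ <;> simp only [rank] at h <;> grind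

theorem exists_eq_even_of_lt_of_lt {a b c : VeroneseVar m} (hab : a < b) (hbc : b < c) :
    ∃ t, a = even t := by
  rcases lt_cases hab with ⟨s, _, _, rfl, _⟩ | ⟨s, rfl, _⟩ | ⟨s, rfl, _⟩ | ⟨_, rfl⟩
  · exact ⟨s, rfl⟩
  · exact ⟨s, rfl⟩
  · exact ⟨s, rfl⟩
  · rcases lt_cases hbc with ⟨_, _, _, h, _⟩ | ⟨_, h, _⟩ | ⟨_, h, _⟩ | ⟨h, _⟩ <;> cases h

end VeroneseVar

/-- The variables `u_i` of the target ring that occur in the image of `π`: `even t` stands for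
`u_{2t+2}`, `odd t` for `u_{2t+3}`, `one` for `u_1` and `last` for `u_n`. -/
inductive BaseVar (m : ℕ) : Type where
  | even (t : Fin m) : BaseVar m
  | odd (t : Fin (m - 1)) : BaseVar m
  | one : BaseVar m
  | last : BaseVar m

namespace BaseVar

open Finsupp (single)

variable {m : ℕ}

/-- The index `i` of the variable `u_i`. -/
def index : BaseVar m → ℕ
  | even t => 2 * t + 2
  | odd t => 2 * t + 3
  | one => 1
  | last => 2 * m + 1

theorem index_injective (hm : m ≠ 0) : Function.Injective (index (m := m)) := by
  rintro (s | s | _ | _) (t | t | _ | _) h <;> simp only [index] at h <;> grind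

/-- The multiset of the variables `u_{2t+2}` in a monomial. -/
noncomputable def evenPart : (BaseVar m →₀ ℕ) →+ Multiset (VeroneseVar m) :=
  Finsupp.liftAddHom fun
    | even t => multiplesHom _ {.even t}
    | _ => 0

/-- The value of the variables `u_{2t+3}` in a monomial under `u_{2t+3} ↦ c t`. -/
noncomputable def oddProd {Q : Type*} [CommMonoid Q] (c : Fin (m - 1) → Q) (d : BaseVar m →₀ ℕ) :
    Q :=
  ∏ t, c t ^ d (odd t)

theorem evenPart_add_single_even (d : BaseVar m →₀ ℕ) (t : Fin m) :
    evenPart (d + single (even t) 1) = .even t ::ₘ evenPart d := by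
  simp [evenPart, add_comm]

theorem evenPart_add_single_of_forall_ne (d : BaseVar m →₀ ℕ) {b : BaseVar m}
    (hb : ∀ t, b ≠ even t) (k : ℕ) : evenPart (d + single b k) = evenPart d := by
  cases b <;> simp_all [evenPart]

section OddProd

variable {Q : Type*} [CommMonoid Q] (c : Fin (m - 1) → Q)

theorem oddProd_add_single_odd (d : BaseVar m →₀ ℕ) (t : Fin (m - 1)) :
    oddProd c (d + single (odd t) 1) = c t * oddProd c d := by
  classical
  have single_odd : ∀ s, single (odd t) 1 (odd s) = if t = s then 1 else 0 := fun s => by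
    simp [Finsupp.single_apply]
  simp only [oddProd, Finsupp.add_apply, pow_add, Finset.prod_mul_distrib, single_odd,
    Finset.prod_pow_boole, Finset.mem_univ, if_true, mul_comm]

theorem oddProd_add_single_of_forall_ne (d : BaseVar m →₀ ℕ) {b : BaseVar m}
    (hb : ∀ t, b ≠ odd t) (k : ℕ) : oddProd c (d + single b k) = oddProd c d := by
  simp [oddProd, hb]

end OddProd

end BaseVar

namespace DoVar

open Finsupp (single)

variable {m : ℕ}

/-- The exponent vector of the image of a variable under `π`. -/
noncomputable def exponent : DoVar m → BaseVar m →₀ ℕ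
  | x1 => single .one 4
  | xn => single .last 4
  | xJ t => single (.even t) 1 + single (.even t) 1
  | xJc t => single (.odd t) 1
  | xP s t _ => single (.even s) 1 + single (.even t) 1
  | x1n => single .one 1 + single .last 1
  | xK1 t => single (.even t) 1 + single .one 2
  | xKn t => single (.even t) 1 + single .last 2
  | yK1 t => single (.even t) 1 + single .one 3 + single .last 1
  | yKn t => single (.even t) 1 + single .one 1 + single .last 3

theorem doImage_eq_rename (K : Type*) [Field K] (v : DoVar m) :
    doImage K m v = rename BaseVar.index (monomial (exponent v) (1 : K)) := by
  cases v <;>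
    simp [doImage, exponent, rename_monomial, Finsupp.mapDomain_add, BaseVar.index, X,
      monomial_pow, monomial_mul, ← Finsupp.single_add]

theorem ker_piDo_eq (K : Type*) [Field K] (hm : m ≠ 0) :
    RingHom.ker (piDo K m) = RingHom.ker (aeval fun v => monomial (exponent v) (1 : K)) := by
  have factor : piDo K m =
      (rename BaseVar.index).comp (aeval fun v => monomial (exponent v) (1 : K)) :=
    algHom_ext fun v => by
      rw [piDo, aeval_X, doImage_eq_rename, AlgHom.comp_apply, aeval_X]
  ext f
  rw [RingHom.mem_ker, RingHom.mem_ker, factor, AlgHom.comp_apply,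
    map_eq_zero_iff _ (rename_injective _ (BaseVar.index_injective hm))]

/-- The products `v a * v b` of the Veronese variables in terms of values `g` of the variables of
`R`. The product `u_1² u_n²` is not the image of a variable, and is written as `x_{1,n}²`. -/
def veroneseProd {Q : Type*} [Monoid Q] (g : DoVar m → Q) : VeroneseVar m → VeroneseVar m → Q
  | .even s, .even t =>
    if h : s < t then g (xP s t h) else if h : t < s then g (xP t s h) else g (xJ s)
  | .even t, .one | .one, .even t => g (xK1 t)
  | .even t, .last | .last, .even t => g (xKn t)
  | .one, .one => g x1
  | .last, .last => g xn
  | .one, .last | .last, .one => g x1n ^ 2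

section VeroneseProd

variable {Q : Type*} [Monoid Q] (g : DoVar m → Q)

theorem veroneseProd_symm (a b : VeroneseVar m) : veroneseProd g a b = veroneseProd g b a := by
  rcases a with s | _ | _ <;> rcases b with t | _ | _ <;> try rfl
  rcases lt_trichotomy s t with h | rfl | h
  · simp [veroneseProd, h, h.asymm]
  · rfl
  · simp [veroneseProd, h, h.asymm]

end VeroneseProd

theorem aeval_veroneseProd {K Q : Type*} [CommSemiring K] [CommSemiring Q] [Algebra K Q]
    (g : DoVar m → Q) (a b : VeroneseVar m) :
    aeval g (veroneseProd (X : DoVar m → MvPolynomial (DoVar m) K) a b) = veroneseProd g a b := by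
  rcases a with s | _ | _ <;> rcases b with t | _ | _ <;>
    simp [veroneseProd, apply_dite (aeval g)]

section Relations

variable {K Q : Type*} [Field K] [CommRing Q] [Algebra K Q] {g : DoVar m → Q}

theorem veroneseProd_mul_eq_of_mem (hg : ∀ f ∈ GDo K m, aeval g f = 0)
    {a b c d a' b' c' d' : VeroneseVar m}
    (h : veroneseProd X a b * veroneseProd X c d - veroneseProd X a' b' * veroneseProd X c' d' ∈
      GDo K m) :
    veroneseProd g a b * veroneseProd g c d = veroneseProd g a' b' * veroneseProd g c' d' := by
  have h := hg _ h
  simpa only [map_sub, map_mul, aeval_veroneseProd, sub_eq_zero] using h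

theorem veroneseProd_pairingsAgree (hg : ∀ f ∈ GDo K m, aeval g f = 0) {a b c d : VeroneseVar m}
    (hab : a < b) (hbc : b < c) (hcd : c < d) : PairingsAgree (veroneseProd g) a b c d := by
  obtain ⟨i, rfl⟩ := VeroneseVar.exists_eq_even_of_lt_of_lt hab hbc
  obtain ⟨j, rfl⟩ := VeroneseVar.exists_eq_even_of_lt_of_lt hbc hcd
  have hij : i < j := hab
  rcases VeroneseVar.lt_cases hcd with
    ⟨k, l, hkl, rfl, rfl⟩ | ⟨k, rfl, rfl⟩ | ⟨k, rfl, rfl⟩ | ⟨rfl, rfl⟩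
  · have hjk : j < k := hbc
    refine ⟨veroneseProd_mul_eq_of_mem hg (Or.inl ⟨i, j, k, l, hij, hjk, hkl, ?_⟩),
      veroneseProd_mul_eq_of_mem hg (Or.inl ⟨i, j, k, l, hij, hjk, hkl, ?_⟩)⟩ <;>
    simp [veroneseProd, *, hij.trans, hjk.trans]
  · have hjk : j < k := hbc
    refine ⟨veroneseProd_mul_eq_of_mem hg (Or.inr (Or.inl ⟨i, j, k, hij, hjk, ?_⟩)),
      (mul_comm _ _).trans
        (veroneseProd_mul_eq_of_mem hg (Or.inr (Or.inl ⟨i, j, k, hij, hjk, ?_⟩)))⟩ <;>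
    simp [veroneseProd, *, hij.trans]
  · have hjk : j < k := hbc
    refine ⟨veroneseProd_mul_eq_of_mem hg (Or.inr (Or.inl ⟨i, j, k, hij, hjk, ?_⟩)),
      (mul_comm _ _).trans
        (veroneseProd_mul_eq_of_mem hg (Or.inr (Or.inl ⟨i, j, k, hij, hjk, ?_⟩)))⟩ <;>
    simp [veroneseProd, *, hij.trans]
  · have h : veroneseProd g (.even i) .one * veroneseProd g (.even j) .last =
        veroneseProd g (.even i) (.even j) * veroneseProd g .one .last :=
      (veroneseProd_mul_eq_of_mem hg
        (Or.inr (Or.inr (Or.inl ⟨i, j, hij, by simp [veroneseProd, hij]⟩)))).trans (mul_comm _ _)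
    have h' : veroneseProd g (.even j) .one * veroneseProd g (.even i) .last =
        veroneseProd g (.even i) .one * veroneseProd g (.even j) .last :=
      veroneseProd_mul_eq_of_mem hg
        (Or.inr (Or.inr (Or.inl ⟨i, j, hij, by simp [veroneseProd]⟩)))
    exact ⟨h, (mul_comm _ _).trans (h'.trans h)⟩

theorem veroneseProd_exchange_of_lt_of_lt (hg : ∀ f ∈ GDo K m, aeval g f = 0)
    {a b c : VeroneseVar m} (hab : a < b) (hbc : b < c) :
    veroneseProd g b b * veroneseProd g a c = veroneseProd g a b * veroneseProd g b c ∧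
      veroneseProd g a b * veroneseProd g a c = veroneseProd g a a * veroneseProd g b c ∧
      veroneseProd g c c * veroneseProd g a b = veroneseProd g a c * veroneseProd g b c := by
  obtain ⟨i, rfl⟩ := VeroneseVar.exists_eq_even_of_lt_of_lt hab hbc
  rcases VeroneseVar.lt_cases hbc with
    ⟨j, k, hjk, rfl, rfl⟩ | ⟨j, rfl, rfl⟩ | ⟨j, rfl, rfl⟩ | ⟨rfl, rfl⟩
  · have hij : i < j := hab
    refine ⟨veroneseProd_mul_eq_of_mem hg (Or.inr (Or.inl ⟨i, j, k, hij, hjk, ?_⟩)),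
      veroneseProd_mul_eq_of_mem hg (Or.inr (Or.inl ⟨i, j, k, hij, hjk, ?_⟩)),
      veroneseProd_mul_eq_of_mem hg (Or.inr (Or.inl ⟨i, j, k, hij, hjk, ?_⟩))⟩ <;>
    simp [veroneseProd, *, hij.trans]
  · have hij : i < j := hab
    refine ⟨veroneseProd_mul_eq_of_mem hg (Or.inr (Or.inr (Or.inl ⟨i, j, hij, ?_⟩))),
      veroneseProd_mul_eq_of_mem hg (Or.inr (Or.inr (Or.inl ⟨i, j, hij, ?_⟩))),
      (mul_comm _ _).trans
        (veroneseProd_mul_eq_of_mem hg (Or.inr (Or.inr (Or.inl ⟨i, j, hij, ?_⟩))))⟩ <;>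
    simp [veroneseProd, *]
  · have hij : i < j := hab
    refine ⟨veroneseProd_mul_eq_of_mem hg (Or.inr (Or.inr (Or.inl ⟨i, j, hij, ?_⟩))),
      veroneseProd_mul_eq_of_mem hg (Or.inr (Or.inr (Or.inl ⟨i, j, hij, ?_⟩))),
      (mul_comm _ _).trans
        (veroneseProd_mul_eq_of_mem hg (Or.inr (Or.inr (Or.inl ⟨i, j, hij, ?_⟩))))⟩ <;>
    simp [veroneseProd, *]
  · refine ⟨veroneseProd_mul_eq_of_mem hg (Or.inr (Or.inr (Or.inr (Or.inl ⟨i, ?_⟩)))),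
      veroneseProd_mul_eq_of_mem hg (Or.inr (Or.inr (Or.inr (Or.inl ⟨i, ?_⟩)))),
      veroneseProd_mul_eq_of_mem hg (Or.inr (Or.inr (Or.inr (Or.inl ⟨i, ?_⟩))))⟩ <;>
    simp [veroneseProd, mul_comm]

theorem veroneseProd_self_mul_self (hg : ∀ f ∈ GDo K m, aeval g f = 0) {a b : VeroneseVar m}
    (hab : a < b) :
    veroneseProd g a a * veroneseProd g b b = veroneseProd g a b * veroneseProd g a b := by
  refine veroneseProd_mul_eq_of_mem hg ?_
  rcases VeroneseVar.lt_cases hab with ⟨i, j, hij, rfl, rfl⟩ | ⟨i, rfl, rfl⟩ | ⟨i, rfl, rfl⟩ |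
    ⟨rfl, rfl⟩
  · exact Or.inr (Or.inr (Or.inl ⟨i, j, hij, by simp [veroneseProd, hij, sq]⟩))
  · exact Or.inr (Or.inr (Or.inr (Or.inl ⟨i, by simp [veroneseProd, sq]⟩)))
  · exact Or.inr (Or.inr (Or.inr (Or.inl ⟨i, by simp [veroneseProd, sq]⟩)))
  · exact Or.inr (Or.inr (Or.inr (Or.inr (by simp [veroneseProd, ← pow_add]))))

theorem symmExchange_veroneseProd (hg : ∀ f ∈ GDo K m, aeval g f = 0) :
    SymmExchange (veroneseProd g) :=
  .of_lt (veroneseProd_symm g) (fun _ _ _ _ => veroneseProd_pairingsAgree hg)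
    (fun _ _ _ => veroneseProd_exchange_of_lt_of_lt hg) (fun _ _ => veroneseProd_self_mul_self hg)

theorem apply_yK1_eq (hg : ∀ f ∈ GDo K m, aeval g f = 0) (t : Fin m) :
    g (yK1 t) = g x1n * g (xK1 t) := by
  have h := hg (X (yK1 t) - X x1n * X (xK1 t))
    (Or.inr (Or.inr (Or.inr (Or.inl ⟨t, by simp⟩))))
  simpa [sub_eq_zero] using h

theorem apply_yKn_eq (hg : ∀ f ∈ GDo K m, aeval g f = 0) (t : Fin m) :
    g (yKn t) = g x1n * g (xKn t) := by
  have h := hg (X (yKn t) - X x1n * X (xKn t))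
    (Or.inr (Or.inr (Or.inr (Or.inl ⟨t, by simp⟩))))
  simpa [sub_eq_zero] using h

end Relations

section Retraction

variable {Q : Type*} [CommSemiring Q] {g : DoVar m → Q}

/-- The value of the monomial with exponent vector `d` when the variables of `R` take the values
`g`: the function whose linear extension retracts the image of `π`. It is `0` when the parities of
the exponents prevent `d` from being a product of images of variables. -/
noncomputable def exponentValue (hw : SymmExchange (veroneseProd g)) (d : BaseVar m →₀ ℕ) : Q :=
  hw.mixedProd .one .last (g x1n) (BaseVar.evenPart d) (d .one) (d .last) *
    BaseVar.oddProd (fun t => g (xJc t)) d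

theorem exponentValue_zero (hw : SymmExchange (veroneseProd g)) : exponentValue hw 0 = 1 := by
  simp [exponentValue, SymmExchange.mixedProd_zero, BaseVar.oddProd]

theorem exponentValue_add_exponent (hw : SymmExchange (veroneseProd g))
    (hy1 : ∀ t, g (yK1 t) = g x1n * g (xK1 t)) (hyn : ∀ t, g (yKn t) = g x1n * g (xKn t))
    (v : DoVar m) (d : BaseVar m →₀ ℕ) :
    exponentValue hw (d + exponent v) = g v * exponentValue hw d := by
  have hp : veroneseProd g .one .last = g x1n ^ 2 := rfl
  rcases v with _ | _ | _ | _ | ⟨s, t, h⟩ | _ | _ | _ | _ | _ <;>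
    simp [exponentValue, exponent, BaseVar.evenPart_add_single_even,
      BaseVar.evenPart_add_single_of_forall_ne, BaseVar.oddProd_add_single_odd,
      BaseVar.oddProd_add_single_of_forall_ne, ← add_assoc, hw.mixedProd_add_two_left,
      hw.mixedProd_add_two_right, hw.mixedProd_succ_succ hp, hw.mixedProd_cons_cons,
      veroneseProd, mul_assoc, mul_left_comm, *, lt_asymm]

end Retraction

theorem ker_piDo_le_span (K : Type*) [Field K] (hm : m ≠ 0) :
    RingHom.ker (piDo K m) ≤ Ideal.span (GDo K m) := by
  let q := Ideal.Quotient.mkₐ K (Ideal.span (GDo K m))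
  have hq : aeval (fun v => q (X v)) = q := (aeval_unique q).symm
  have hg : ∀ f ∈ GDo K m, aeval (fun v => q (X v)) f = 0 := fun f hf => by
    rw [hq]
    exact Ideal.Quotient.eq_zero_iff_mem.2 (Ideal.subset_span hf)
  have hw := symmExchange_veroneseProd hg
  calc RingHom.ker (piDo K m)
      = RingHom.ker (aeval fun v => monomial (exponent v) (1 : K)) := ker_piDo_eq K hm
    _ ≤ RingHom.ker (aeval fun v => q (X v)) :=
        ker_aeval_monomial_le (exponentValue_zero hw)
          (exponentValue_add_exponent hw (apply_yK1_eq hg) (apply_yKn_eq hg))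
    _ = Ideal.span (GDo K m) := by rw [hq]; exact Ideal.Quotient.mkₐ_ker K _

theorem span_GDo_le_ker (K : Type*) [Field K] (m : ℕ) :
    Ideal.span (GDo K m) ≤ RingHom.ker (piDo K m) := by
  rw [Ideal.span_le]
  intro f hf
  rw [SetLike.mem_coe, RingHom.mem_ker]
  rcases hf with ⟨i, j, k, l, _, _, _, rfl | rfl⟩ |
    ⟨i, j, k, _, _, rfl | rfl | rfl | rfl | rfl | rfl | rfl⟩ |
    ⟨i, j, _, rfl | rfl | rfl | rfl | rfl | rfl | rfl | rfl | rfl⟩ |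
    ⟨i, rfl | rfl | rfl | rfl | rfl | rfl | rfl⟩ | rfl <;>
  · simp only [piDo, map_sub, map_mul, map_pow, aeval_X, doImage]
    ring

end DoVar

theorem GDo_span_eq_ker_general (K : Type*) [Field K] (m : ℕ) (hm : m ≠ 0) :
    Ideal.span (GDo K m) = RingHom.ker (piDo K m) :=
  le_antisymm (DoVar.span_GDo_le_ker K m) (DoVar.ker_piDo_le_span K hm)

/-- the ideal of `R` generated by `𝒢_{D_{2m+1}}` equals the toric ideal
`I_{D_{2m+1}} = ker π`. -/
theorem GDo_span_eq_ker (K : Type*) [Field K] (m : ℕ) (hm : 2 ≤ m) :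
    Ideal.span (GDo K m) = RingHom.ker (piDo K m) :=
  GDo_span_eq_ker_general K m (by omega)
end

section
/- The set 𝒢_{D_{2m+1}} is a minimal generating set of the toric ideal I_{D_{2m+1}}: the ideal generated by 𝒢_{D_{2m+1}} equals I_{D_{2m+1}}, and no proper subset of 𝒢_{D_{2m+1}} generates I_{D_{2m+1}}. -/
open MvPolynomial

/-!
Minimality: from every binomial one can choose a term, its lead, that is divisible by no term of
another binomial of the set. The coefficient of that lead then vanishes on the ideal generated by
the others.

Generation: put `A = u_1²` and `B = u_n²`. Apart from the `x_j` with `j ∈ J^c`, `x_{1,n}` and the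
`y`'s, which are eliminated, the variables are sent to the products of two letters among `A`, `B`
and the `u_i` with `i ∈ J`, except that `AB` is represented by `x_{1,n}²`. The remaining binomials
express the other pairings of a sorted word of four letters by the pairing of consecutive letters,
and thus imply all relations of the second Veronese algebra. A monomial modulo `𝒢` therefore only
depends on the power of `x_{1,n}`, the multiset of letters and the odd part, and these are
determined by the image under `π` up to trading `x_{1,n}²` for the pair `AB`.
-/

section MonomialCriteria

variable {σ τ R : Type*} [CommSemiring R]

/-- The monomial `∏_{v ∈ M} X v`, which lets the generators be written as multisets of variables. -/
noncomputable def mon (R : Type*) [CommSemiring R] (M : Multiset σ) : MvPolynomial σ R :=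
  (M.map X).prod

lemma mon_add (M N : Multiset σ) : mon R (M + N) = mon R M * mon R N := by
  simp [mon]

lemma mon_eq_monomial [DecidableEq σ] (M : Multiset σ) :
    mon R M = monomial (Multiset.toFinsupp M) 1 := by
  induction M using Multiset.induction with
  | empty => simp [mon]
  | cons v M ih =>
    rw [← Multiset.singleton_add, mon_add, ih, map_add, Multiset.toFinsupp_singleton]
    simp [mon, X, monomial_mul]

lemma coeff_mon [DecidableEq σ] (M N : Multiset σ) :
    coeff (Multiset.toFinsupp N) (mon R M) = if M = N then 1 else 0 := by
  simp [mon_eq_monomial, coeff_monomial]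

lemma monomial_one_eq_mon (s : σ →₀ ℕ) : monomial s (1 : R) = mon R (Finsupp.toMultiset s) := by
  classical rw [mon_eq_monomial, Finsupp.toMultiset_toFinsupp]

theorem coeff_eq_zero_of_mem_span {G : Set (MvPolynomial σ R)} {a : σ →₀ ℕ}
    (hG : ∀ h ∈ G, ∀ b ≤ a, coeff b h = 0) {f : MvPolynomial σ R} (hf : f ∈ Ideal.span G) :
    coeff a f = 0 := by
  have hup : IsUpperSet {b | ¬ b ≤ a} := fun _ _ hbc hb hc => hb (hbc.trans hc)
  have hspan : Ideal.span G ≤ restrictSupportIdeal R {b | ¬ b ≤ a} hup :=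
    Ideal.span_le.mpr fun h hh b hb hba => mem_support_iff.mp hb (hG h hh b hba)
  by_contra hne
  exact hspan hf (mem_support_iff.mpr hne) le_rfl

theorem span_ne_span_of_ssubset {G S : Set (MvPolynomial σ R)}
    (hG : ∀ g ∈ G, ∃ a, coeff a g ≠ 0 ∧ ∀ h ∈ G, h ≠ g → ∀ b ≤ a, coeff b h = 0)
    (hS : S ⊂ G) : Ideal.span S ≠ Ideal.span G := by
  intro hspan
  obtain ⟨g, hg, hgS⟩ := Set.exists_of_ssubset hS
  obtain ⟨a, hag, hprivate⟩ := hG g hg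
  have hgspan : g ∈ Ideal.span S := hspan ▸ Ideal.subset_span hg
  refine hag (coeff_eq_zero_of_mem_span (fun h hh => ?_) hgspan)
  exact hprivate h (hS.subset hh) (ne_of_mem_of_not_mem hh hgS)

theorem ker_le_of_monomial {R : Type*} [CommRing R]
    {φ : MvPolynomial σ R →ₐ[R] MvPolynomial τ R}
    {I : Ideal (MvPolynomial σ R)} {D : Multiset σ → τ →₀ ℕ}
    (hφ : ∀ M, φ (mon R M) = monomial (D M) 1)
    (hI : ∀ M N, D M = D N → Ideal.Quotient.mk I (mon R M) = Ideal.Quotient.mk I (mon R N)) :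
    RingHom.ker φ ≤ I := by
  let q := (Ideal.Quotient.mkₐ R I).toLinearMap
  let ρ : MvPolynomial τ R →ₗ[R] MvPolynomial σ R ⧸ I :=
    (basisMonomials τ R).constr R fun e => q (mon R (Function.invFun D e))
  have hρ (M : Multiset σ) : ρ (monomial (D M) 1) = q (mon R M) := by
    rw [show monomial (D M) (1 : R) = basisMonomials τ R (D M) by rw [coe_basisMonomials],
      Module.Basis.constr_basis]
    exact hI _ _ (Function.invFun_eq ⟨M, rfl⟩)
  have hfactor : ρ ∘ₗ φ.toLinearMap = q := by
    refine (basisMonomials σ R).ext fun s => ?_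
    have hs : basisMonomials σ R s = mon R (Finsupp.toMultiset s) :=
      (congrFun (coe_basisMonomials σ R) s).trans (monomial_one_eq_mon s)
    rw [hs, LinearMap.comp_apply, AlgHom.toLinearMap_apply, hφ, hρ]
  intro f hf
  have hf0 : φ f = 0 := hf
  have hqf : q f = 0 := by
    rw [← hfactor, LinearMap.comp_apply, AlgHom.toLinearMap_apply, hf0, map_zero]
  exact Ideal.Quotient.eq_zero_iff_mem.mp hqf

end MonomialCriteria

section RankOne

variable {V Q : Type*}

/-- A symmetric matrix with vanishing `2 × 2` minors, that is, a family of elements satisfying the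
relations of the second Veronese algebra on the letters `V`. -/
structure IsVeronese [Mul Q] (z : V → V → Q) : Prop where
  symm : ∀ p q, z p q = z q p
  exchange : ∀ p q r s, z p q * z r s = z p r * z q s

/-- The two relations that rewrite the products of the other pairings of a sorted word `p q r s` as
the product of the pairing into consecutive letters. -/
def Straightens [Mul Q] (z : V → V → Q) (p q r s : V) : Prop :=
  z p r * z q s = z p q * z r s ∧ z p s * z q r = z p q * z r s

theorem IsVeronese.of_straightens {α : Type*} [LinearOrder α] [CommMagma Q] {z : V → V → Q}
    (key : V → α) (symm : ∀ p q, z p q = z q p)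
    (sorted : ∀ p q r s, key p ≤ key q → key q ≤ key r → key r ≤ key s → Straightens z p q r s) :
    IsVeronese z := by
  refine ⟨symm, fun p q r s => ?_⟩
  wlog hqr : key q ≤ key r generalizing q r
  · exact (this r q (le_of_not_ge hqr)).symm
  wlog hps : key p ≤ key s generalizing p s
  · rw [mul_comm, mul_comm (z p r), symm r s, symm p q, symm q s, symm p r]
    exact (this s p (le_of_not_ge hps)).symm
  wlog hpq : key p ≤ key q generalizing p q r s
  · rw [symm p q, symm r s, mul_comm (z p r)]
    exact this p s hps q r hqr (le_of_not_ge hpq)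
  rcases le_total (key r) (key s) with hrs | hsr
  · exact (sorted p q r s hpq hqr hrs).1.symm
  rcases le_total (key q) (key s) with hqs | hsq
  · rw [symm r s]
    exact (sorted p q s r hpq hqs hsr).2.symm
  · obtain ⟨h₁, h₂⟩ := sorted p s q r hps hsq hqr
    rw [symm r s, symm q s, h₁, h₂]

/-- The product of the values of `z` on consecutive pairs of letters. Words of odd length get the
value `0`, which is what makes the product invariant under permutations. -/
def listPairProd [Mul Q] [One Q] [Zero Q] (z : V → V → Q) : List V → Q
  | [] => 1
  | [_] => 0
  | p :: q :: l => z p q * listPairProd z l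

variable [CommMonoidWithZero Q] {z : V → V → Q}

lemma IsVeronese.listPairProd_perm (hz : IsVeronese z) {l l' : List V} (h : l.Perm l') :
    listPairProd z l = listPairProd z l' ∧
      ∀ p, listPairProd z (p :: l) = listPairProd z (p :: l') := by
  induction h with
  | nil => simp
  | cons p _ ih => exact ⟨ih.2 p, fun q => by simp [listPairProd, ih.1]⟩
  | trans _ _ ih₁ ih₂ => exact ⟨ih₁.1.trans ih₂.1, fun p => (ih₁.2 p).trans (ih₂.2 p)⟩
  | swap p q l =>
    refine ⟨by simp only [listPairProd, hz.symm p q], fun r => ?_⟩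
    cases l with
    | nil => simp [listPairProd]
    | cons s l => simp only [listPairProd, ← mul_assoc, hz.exchange r q p s]

/-- `listPairProd` as a function of the multiset of letters. -/
def IsVeronese.pairProd (hz : IsVeronese z) (M : Multiset V) : Q :=
  Quotient.liftOn M (listPairProd z) fun _ _ h => (hz.listPairProd_perm h).1

@[simp]
lemma IsVeronese.pairProd_zero (hz : IsVeronese z) : hz.pairProd 0 = 1 := rfl

@[simp]
lemma IsVeronese.pairProd_cons_cons (hz : IsVeronese z) (p q : V) (M : Multiset V) :
    hz.pairProd (p ::ₘ q ::ₘ M) = z p q * hz.pairProd M :=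
  Quotient.inductionOn M fun _ => rfl

lemma IsVeronese.pairProd_nsmul_pair_add (hz : IsVeronese z) (p q : V) (t : ℕ) (M : Multiset V) :
    hz.pairProd (t • {p, q} + M) = z p q ^ t * hz.pairProd M := by
  induction t with
  | zero => simp
  | succ t ih =>
    rw [succ_nsmul', add_assoc, pow_succ', mul_assoc, ← ih, ← hz.pairProd_cons_cons,
      Multiset.insert_eq_cons, Multiset.cons_add, Multiset.singleton_add]

end RankOne

/-- The binomials of `𝒢_{D_{2m+1}}`, written as `ε • (lead - tail)`. The lead is chosen so
that no term of another binomial divides it; this forces `ε = -1` for `ijAB'`. Constructors are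
named by the common image of lead and tail under `π`, with `A = u_1²` and `B = u_n²`. -/
inductive Gen (m : ℕ) : ℤˣ → Multiset (DoVar m) → Multiset (DoVar m) → Prop where
  | ijkl {i j k l : Fin m} (hij : i < j) (hjk : j < k) (hkl : k < l) :
      Gen m 1 {.xP i k (hij.trans hjk), .xP j l (hjk.trans hkl)} {.xP i j hij, .xP k l hkl}
  | ijkl' {i j k l : Fin m} (hij : i < j) (hjk : j < k) (hkl : k < l) :
      Gen m 1 {.xP i l (hij.trans (hjk.trans hkl)), .xP j k hjk} {.xP i j hij, .xP k l hkl}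
  | ijkA {i j k : Fin m} (hij : i < j) (hjk : j < k) :
      Gen m 1 {.xP j k hjk, .xK1 i} {.xP i j hij, .xK1 k}
  | ijkA' {i j k : Fin m} (hij : i < j) (hjk : j < k) :
      Gen m 1 {.xP i k (hij.trans hjk), .xK1 j} {.xP i j hij, .xK1 k}
  | ijkB {i j k : Fin m} (hij : i < j) (hjk : j < k) :
      Gen m 1 {.xP j k hjk, .xKn i} {.xP i j hij, .xKn k}
  | ijkB' {i j k : Fin m} (hij : i < j) (hjk : j < k) :
      Gen m 1 {.xP i k (hij.trans hjk), .xKn j} {.xP i j hij, .xKn k}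
  | ijjk {i j k : Fin m} (hij : i < j) (hjk : j < k) :
      Gen m 1 {.xJ j, .xP i k (hij.trans hjk)} {.xP i j hij, .xP j k hjk}
  | iijk {i j k : Fin m} (hij : i < j) (hjk : j < k) :
      Gen m 1 {.xP i j hij, .xP i k (hij.trans hjk)} {.xJ i, .xP j k hjk}
  | ijkk {i j k : Fin m} (hij : i < j) (hjk : j < k) :
      Gen m 1 {.xJ k, .xP i j hij} {.xP i k (hij.trans hjk), .xP j k hjk}
  | iijj {i j : Fin m} (hij : i < j) : Gen m 1 {.xJ i, .xJ j} {.xP i j hij, .xP i j hij}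
  | ijAA {i j : Fin m} (hij : i < j) : Gen m 1 {.xP i j hij, .x1} {.xK1 i, .xK1 j}
  | ijBB {i j : Fin m} (hij : i < j) : Gen m 1 {.xP i j hij, .xn} {.xKn i, .xKn j}
  | iijA {i j : Fin m} (hij : i < j) : Gen m 1 {.xP i j hij, .xK1 i} {.xJ i, .xK1 j}
  | iijB {i j : Fin m} (hij : i < j) : Gen m 1 {.xP i j hij, .xKn i} {.xJ i, .xKn j}
  | ijjA {i j : Fin m} (hij : i < j) : Gen m 1 {.xJ j, .xK1 i} {.xP i j hij, .xK1 j}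
  | ijjB {i j : Fin m} (hij : i < j) : Gen m 1 {.xJ j, .xKn i} {.xP i j hij, .xKn j}
  | ijAB {i j : Fin m} (hij : i < j) : Gen m 1 {.xK1 j, .xKn i} {.xK1 i, .xKn j}
  | ijAB' {i j : Fin m} (hij : i < j) :
      Gen m (-1) {.x1n, .x1n, .xP i j hij} {.xK1 i, .xKn j}
  | iiAA (i : Fin m) : Gen m 1 {.xJ i, .x1} {.xK1 i, .xK1 i}
  | iiBB (i : Fin m) : Gen m 1 {.xJ i, .xn} {.xKn i, .xKn i}
  | iiAB (i : Fin m) : Gen m 1 {.xK1 i, .xKn i} {.x1n, .x1n, .xJ i}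
  | iAAB (i : Fin m) : Gen m 1 {.xKn i, .x1} {.x1n, .x1n, .xK1 i}
  | y1 (i : Fin m) : Gen m 1 {.yK1 i} {.x1n, .xK1 i}
  | yn (i : Fin m) : Gen m 1 {.yKn i} {.x1n, .xKn i}
  | iABB (i : Fin m) : Gen m 1 {.xK1 i, .xn} {.x1n, .x1n, .xKn i}
  | AABB : Gen m 1 {.x1, .xn} {.x1n, .x1n, .x1n, .x1n}

section Generators

variable {K : Type*} [Field K] {m : ℕ} {ε ε' : ℤˣ} {a b a' b' : Multiset (DoVar m)}

lemma exists_gen_of_mem_GDo {g : MvPolynomial (DoVar m) K} (hg : g ∈ GDo K m) :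
    ∃ ε a b, Gen m ε a b ∧ g = ε • (mon K a - mon K b) := by
  rcases hg with ⟨i, j, k, l, hij, hjk, hkl, h⟩ | ⟨i, j, k, hij, hjk, h⟩ | ⟨i, j, hij, h⟩ |
    ⟨i, h⟩ | h
  · rcases h with h | h
    exacts [⟨_, _, _, .ijkl hij hjk hkl, by simp [h, mon]⟩,
      ⟨_, _, _, .ijkl' hij hjk hkl, by simp [h, mon]⟩]
  · rcases h with h | h | h | h | h | h | h
    exacts [⟨_, _, _, .ijkA hij hjk, by simp [h, mon]⟩, ⟨_, _, _, .ijkA' hij hjk, by simp [h, mon]⟩,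
      ⟨_, _, _, .ijkB hij hjk, by simp [h, mon]⟩, ⟨_, _, _, .ijkB' hij hjk, by simp [h, mon]⟩,
      ⟨_, _, _, .ijjk hij hjk, by simp [h, mon]⟩, ⟨_, _, _, .iijk hij hjk, by simp [h, mon]⟩,
      ⟨_, _, _, .ijkk hij hjk, by simp [h, mon]⟩]
  · rcases h with h | h | h | h | h | h | h | h | h
    exacts [⟨_, _, _, .iijj hij, by simp [h, mon, sq]⟩, ⟨_, _, _, .ijAA hij, by simp [h, mon]⟩,
      ⟨_, _, _, .ijBB hij, by simp [h, mon]⟩, ⟨_, _, _, .iijA hij, by simp [h, mon]⟩,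
      ⟨_, _, _, .iijB hij, by simp [h, mon]⟩, ⟨_, _, _, .ijjA hij, by simp [h, mon]⟩,
      ⟨_, _, _, .ijjB hij, by simp [h, mon]⟩, ⟨_, _, _, .ijAB hij, by simp [h, mon]⟩,
      ⟨_, _, _, .ijAB' hij, by simp [h, mon]; ring⟩]
  · rcases h with h | h | h | h | h | h | h
    exacts [⟨_, _, _, .iiAA i, by simp [h, mon, sq]⟩, ⟨_, _, _, .iiBB i, by simp [h, mon, sq]⟩,
      ⟨_, _, _, .iiAB i, by simp [h, mon]; ring⟩, ⟨_, _, _, .iAAB i, by simp [h, mon]; ring⟩,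
      ⟨_, _, _, .y1 i, by simp [h, mon]⟩, ⟨_, _, _, .yn i, by simp [h, mon]⟩,
      ⟨_, _, _, .iABB i, by simp [h, mon]; ring⟩]
  · exact ⟨_, _, _, .AABB, by simp [h, mon]; ring⟩

lemma Gen.mem_GDo (h : Gen m ε a b) : ε • (mon K a - mon K b) ∈ GDo K m := by
  cases h
  case ijkl hij hjk hkl => exact .inl ⟨_, _, _, _, hij, hjk, hkl, by simp [mon]⟩
  case ijkl' hij hjk hkl => exact .inl ⟨_, _, _, _, hij, hjk, hkl, by simp [mon]⟩
  case AABB => exact .inr (.inr (.inr (.inr (by simp [mon]; ring))))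
  case ijkA hij hjk | ijkA' hij hjk | ijkB hij hjk | ijkB' hij hjk | ijjk hij hjk | iijk hij hjk |
      ijkk hij hjk =>
    exact .inr (.inl ⟨_, _, _, hij, hjk, by simp [mon]⟩)
  case iijj hij | ijAA hij | ijBB hij | iijA hij | iijB hij | ijjA hij | ijjB hij | ijAB hij |
      ijAB' hij =>
    exact .inr (.inr (.inl ⟨_, _, hij, by simp [mon, sq, mul_assoc]⟩))
  case iiAA i | iiBB i | iiAB i | iAAB i | y1 i | yn i | iABB i =>
    exact .inr (.inr (.inr (.inl ⟨i, by simp [mon, sq, mul_assoc]⟩)))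

lemma Gen.piDo_eq (h : Gen m ε a b) : piDo K m (mon K a) = piDo K m (mon K b) := by
  cases h <;> simp only [mon, piDo, Multiset.insert_eq_cons, Multiset.map_cons,
    Multiset.map_singleton, Multiset.prod_cons, Multiset.prod_singleton, map_mul, aeval_X, doImage]
    <;> ring

variable (K) in
theorem span_GDo_le_ker_piDo : Ideal.span (GDo K m) ≤ RingHom.ker (piDo K m) := by
  refine Ideal.span_le.mpr fun g hg => ?_
  obtain ⟨ε, a, b, hgen, rfl⟩ := exists_gen_of_mem_GDo hg
  rw [SetLike.mem_coe, RingHom.mem_ker, Units.smul_def, map_zsmul, map_sub, hgen.piDo_eq, sub_self,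
    smul_zero]

lemma Gen.eq_x1n_of_pair_le_lead (h : Gen m ε a b) {v : DoVar m} (hv : {v, v} ≤ a) : v = .x1n := by
  classical
  have := Multiset.le_iff_count.mp hv v
  cases h <;> simp [Multiset.count_cons, Multiset.count_singleton] at this <;> grind

set_option maxHeartbeats 1000000 in
-- all pairs of constructors of `Gen` are compared
lemma Gen.eq_of_lead_subset (h : Gen m ε a b) (h' : Gen m ε' a' b') (hsub : a' ⊆ a) :
    ε' = ε ∧ a' = a ∧ b' = b := by
  cases h <;> cases h' <;> simp [Multiset.subset_iff] at hsub <;> grind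

set_option maxHeartbeats 1000000 in
-- all pairs of constructors of `Gen` are compared
lemma Gen.not_tail_le_lead (h : Gen m ε a b) (h' : Gen m ε' a' b') : ¬ b' ≤ a := by
  intro hle
  have hsub := Multiset.subset_of_le hle
  have hcard := Multiset.card_le_card hle
  have hsq (v : DoVar m) (hb : b' = {v, v}) : v = .x1n := h.eq_x1n_of_pair_le_lead (hb ▸ hle)
  cases h'
  case iijj | iiAA | iiBB => simpa using hsq _ rfl
  all_goals
    clear hsq hle
    cases h <;> simp [Multiset.subset_iff] at hsub hcard <;> grind

theorem exists_private_monomial {g : MvPolynomial (DoVar m) K} (hg : g ∈ GDo K m) :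
    ∃ e, coeff e g ≠ 0 ∧ ∀ h ∈ GDo K m, h ≠ g → ∀ c ≤ e, coeff c h = 0 := by
  classical
  obtain ⟨ε, a, b, hgen, rfl⟩ := exists_gen_of_mem_GDo hg
  refine ⟨Multiset.toFinsupp a, ?_, fun h hh hne c hc => ?_⟩
  · have hba : b ≠ a := fun hba => hgen.not_tail_le_lead hgen hba.le
    rw [coeff_smul, coeff_sub, coeff_mon, coeff_mon, if_pos rfl, if_neg hba, sub_zero]
    exact (smul_ne_zero_iff_ne ε).mpr one_ne_zero
  · obtain ⟨ε', a', b', hgen', rfl⟩ := exists_gen_of_mem_GDo hh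
    obtain ⟨N, rfl⟩ := (Multiset.toFinsupp (α := DoVar m)).surjective c
    have hNa : N ≤ a := Finsupp.orderIsoMultiset.symm.le_iff_le.mp hc
    have ha' : a' ≠ N := by
      rintro rfl
      obtain ⟨rfl, rfl, rfl⟩ := hgen.eq_of_lead_subset hgen' (Multiset.subset_of_le hNa)
      exact hne rfl
    have hb' : b' ≠ N := by
      rintro rfl
      exact hgen.not_tail_le_lead hgen' hNa
    rw [coeff_smul, coeff_sub, coeff_mon, coeff_mon, if_neg ha', if_neg hb', sub_zero, smul_zero]

end Generators

section Straightening

variable (K : Type*) [Field K] {m : ℕ}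

/-- The class of a variable modulo the ideal generated by `𝒢_{D_{2m+1}}`. -/
noncomputable def varClass (v : DoVar m) : MvPolynomial (DoVar m) K ⧸ Ideal.span (GDo K m) :=
  Ideal.Quotient.mk _ (X v)

lemma mk_mon (M : Multiset (DoVar m)) :
    Ideal.Quotient.mk (Ideal.span (GDo K m)) (mon K M) = (M.map (varClass K)).prod := by
  rw [mon, map_multiset_prod, Multiset.map_map]
  rfl

section

variable {ε : ℤˣ} {a b : Multiset (DoVar m)} {v w x y : DoVar m}

lemma Gen.prod_varClass (h : Gen m ε a b) :
    (a.map (varClass K)).prod = (b.map (varClass K)).prod := by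
  rw [← mk_mon, ← mk_mon, Ideal.Quotient.mk_eq_mk_iff_sub_mem]
  have hmem := Ideal.subset_span (h.mem_GDo (K := K))
  rcases Int.units_eq_one_or ε with rfl | rfl
  · rwa [one_smul, SetLike.mem_coe] at hmem
  · rwa [Units.neg_smul, one_smul, SetLike.mem_coe, neg_mem_iff] at hmem

lemma Gen.pair_eq_pair (h : Gen m ε {v, w} {x, y}) :
    varClass K v * varClass K w = varClass K x * varClass K y := by
  simpa using h.prod_varClass K

lemma Gen.pair_eq_x1n_sq (h : Gen m ε {v, w} {.x1n, .x1n, x}) :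
    varClass K v * varClass K w = varClass K .x1n ^ 2 * varClass K x := by
  simpa [sq, mul_assoc] using h.prod_varClass K

end

/-- The letters of the Veronese part of the algebra: `J t` stands for `u_{2t+2}`, `A` for `u_1²` and
`B` for `u_n²`. -/
inductive Letter (m : ℕ) : Type where
  | J : Fin m → Letter m
  | A : Letter m
  | B : Letter m
  deriving DecidableEq

open Letter

/-- The rank of a letter in the order in which words are straightened. -/
def Letter.key : Letter m → ℕ
  | J t => t
  | A => m
  | B => m + 1

/-- The class of the variable, or of `x_{1,n}²`, which `π` maps to the product of two letters. -/
noncomputable def pairClass :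
    Letter m → Letter m → MvPolynomial (DoVar m) K ⧸ Ideal.span (GDo K m)
  | J s, J t => if h : s < t then varClass K (.xP s t h) else
      if h : t < s then varClass K (.xP t s h) else varClass K (.xJ s)
  | J s, A | A, J s => varClass K (.xK1 s)
  | J s, B | B, J s => varClass K (.xKn s)
  | A, A => varClass K .x1
  | B, B => varClass K .xn
  | A, B | B, A => varClass K .x1n ^ 2

lemma pairClass_symm (p q : Letter m) : pairClass K p q = pairClass K q p := by
  rcases p with s | _ | _ <;> rcases q with t | _ | _ <;> try rfl
  rcases lt_trichotomy s t with h | rfl | h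
  · simp only [pairClass, dif_pos h, dif_neg h.not_gt]
  · rfl
  · simp only [pairClass, dif_pos h, dif_neg h.not_gt]

variable {i j k l : Fin m}

lemma pairClass_of_lt (h : i < j) : pairClass K (J i) (J j) = varClass K (.xP i j h) :=
  dif_pos h

lemma pairClass_self : pairClass K (J i) (J i) = varClass K (.xJ i) := by
  simp [pairClass]

lemma pairClass_J_A : pairClass K (J i) A = varClass K (.xK1 i) := rfl

lemma pairClass_J_B : pairClass K (J i) B = varClass K (.xKn i) := rfl

lemma pairClass_A_A : pairClass K (A : Letter m) A = varClass K .x1 := rfl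

lemma pairClass_B_B : pairClass K (B : Letter m) B = varClass K .xn := rfl

lemma pairClass_A_B : pairClass K (A : Letter m) B = varClass K .x1n ^ 2 := rfl

variable {K} in
lemma straightens_self_self_self (p q : Letter m) : Straightens (pairClass K) p p p q :=
  ⟨rfl, mul_comm _ _⟩

variable {K} in
lemma straightens_of_self_self_self (p q : Letter m) : Straightens (pairClass K) p q q q :=
  ⟨rfl, rfl⟩

lemma straightens_JJJJ (hij : i ≤ j) (hjk : j ≤ k) (hkl : k ≤ l) :
    Straightens (pairClass K) (J i) (J j) (J k) (J l) := by
  rcases hij.eq_or_lt with rfl | hij <;> rcases hjk.eq_or_lt with rfl | hjk <;>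
    rcases hkl.eq_or_lt with rfl | hkl
  · exact straightens_self_self_self _ _
  · exact straightens_self_self_self _ _
  · have h := (Gen.iijj hjk).pair_eq_pair K
    simp only [Straightens, pairClass_self, pairClass_of_lt, hjk]
    constructor <;> linear_combination -h
  · have h := (Gen.iijk hjk hkl).pair_eq_pair K
    simp only [Straightens, pairClass_self, pairClass_of_lt, hjk, hkl, hjk.trans hkl]
    constructor <;> linear_combination h
  · exact straightens_of_self_self_self _ _
  · have h := (Gen.ijjk hij hkl).pair_eq_pair K
    simp only [Straightens, pairClass_self, pairClass_of_lt, hij, hkl, hij.trans hkl, true_and]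
    linear_combination h
  · have h := (Gen.ijkk hij hjk).pair_eq_pair K
    simp only [Straightens, pairClass_self, pairClass_of_lt, hij, hjk, hij.trans hjk]
    constructor <;> linear_combination -h
  · simp only [Straightens, pairClass_of_lt, hij, hjk, hkl, hij.trans hjk, hjk.trans hkl,
      (hij.trans hjk).trans hkl]
    exact ⟨(Gen.ijkl hij hjk hkl).pair_eq_pair K, (Gen.ijkl' hij hjk hkl).pair_eq_pair K⟩

lemma straightens_JJJA (hij : i ≤ j) (hjk : j ≤ k) :
    Straightens (pairClass K) (J i) (J j) (J k) A := by
  rcases hij.eq_or_lt with rfl | hij <;> rcases hjk.eq_or_lt with rfl | hjk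
  · exact straightens_self_self_self _ _
  · simp only [Straightens, pairClass_self, pairClass_of_lt, hjk, pairClass_J_A]
    constructor <;> linear_combination (Gen.iijA hjk).pair_eq_pair K
  · simp only [Straightens, pairClass_self, pairClass_of_lt, hij, pairClass_J_A, true_and]
    linear_combination (Gen.ijjA hij).pair_eq_pair K
  · simp only [Straightens, pairClass_of_lt, hij, hjk, hij.trans hjk, pairClass_J_A]
    exact ⟨(Gen.ijkA' hij hjk).pair_eq_pair K,
      by linear_combination (Gen.ijkA hij hjk).pair_eq_pair K⟩

lemma straightens_JJJB (hij : i ≤ j) (hjk : j ≤ k) :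
    Straightens (pairClass K) (J i) (J j) (J k) B := by
  rcases hij.eq_or_lt with rfl | hij <;> rcases hjk.eq_or_lt with rfl | hjk
  · exact straightens_self_self_self _ _
  · simp only [Straightens, pairClass_self, pairClass_of_lt, hjk, pairClass_J_B]
    constructor <;> linear_combination (Gen.iijB hjk).pair_eq_pair K
  · simp only [Straightens, pairClass_self, pairClass_of_lt, hij, pairClass_J_B, true_and]
    linear_combination (Gen.ijjB hij).pair_eq_pair K
  · simp only [Straightens, pairClass_of_lt, hij, hjk, hij.trans hjk, pairClass_J_B]
    exact ⟨(Gen.ijkB' hij hjk).pair_eq_pair K,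
      by linear_combination (Gen.ijkB hij hjk).pair_eq_pair K⟩

lemma straightens_JJAA (hij : i ≤ j) : Straightens (pairClass K) (J i) (J j) A A := by
  rcases hij.eq_or_lt with rfl | hij
  · simp only [Straightens, pairClass_self, pairClass_J_A, pairClass_A_A]
    constructor <;> linear_combination -(Gen.iiAA i).pair_eq_pair K
  · simp only [Straightens, pairClass_of_lt, hij, pairClass_J_A, pairClass_A_A]
    constructor <;> linear_combination -(Gen.ijAA hij).pair_eq_pair K

lemma straightens_JJBB (hij : i ≤ j) : Straightens (pairClass K) (J i) (J j) B B := by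
  rcases hij.eq_or_lt with rfl | hij
  · simp only [Straightens, pairClass_self, pairClass_J_B, pairClass_B_B]
    constructor <;> linear_combination -(Gen.iiBB i).pair_eq_pair K
  · simp only [Straightens, pairClass_of_lt, hij, pairClass_J_B, pairClass_B_B]
    constructor <;> linear_combination -(Gen.ijBB hij).pair_eq_pair K

lemma straightens_JJAB (hij : i ≤ j) : Straightens (pairClass K) (J i) (J j) A B := by
  rcases hij.eq_or_lt with rfl | hij
  · simp only [Straightens, pairClass_self, pairClass_J_A, pairClass_J_B, pairClass_A_B]
    constructor <;> linear_combination (Gen.iiAB i).pair_eq_x1n_sq K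
  · have h := (Gen.ijAB hij).pair_eq_pair K
    have h' : varClass K .x1n ^ 2 * varClass K (.xP i j hij) =
        varClass K (.xK1 i) * varClass K (.xKn j) := by
      simpa [sq, mul_assoc] using (Gen.ijAB' hij).prod_varClass K
    simp only [Straightens, pairClass_of_lt, hij, pairClass_J_A, pairClass_J_B, pairClass_A_B]
    exact ⟨by linear_combination -h', by linear_combination h - h'⟩

lemma straightens_JAAB : Straightens (pairClass K) (J i) A A B :=
  ⟨rfl, (Gen.iAAB i).pair_eq_x1n_sq K |>.trans (mul_comm _ _)⟩

lemma straightens_JABB : Straightens (pairClass K) (J i) A B B := by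
  simp only [Straightens, pairClass_J_A, pairClass_J_B, pairClass_A_B, pairClass_B_B]
  constructor <;> linear_combination -(Gen.iABB i).pair_eq_x1n_sq K

lemma straightens_AABB : Straightens (pairClass K) (A : Letter m) A B B := by
  have h : varClass K (m := m) .x1 * varClass K .xn = varClass K .x1n ^ 4 := by
    simpa [pow_succ, mul_assoc] using Gen.AABB.prod_varClass K
  simp only [Straightens, pairClass_A_A, pairClass_A_B, pairClass_B_B]
  constructor <;> linear_combination -h

theorem pairClass_isVeronese : IsVeronese (pairClass K (m := m)) := by
  refine .of_straightens Letter.key (pairClass_symm K) fun p q r s hpq hqr hrs => ?_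
  rcases p with i | _ | _ <;> rcases q with j | _ | _ <;> rcases r with k | _ | _ <;>
    rcases s with l | _ | _ <;> simp only [Letter.key] at hpq hqr hrs <;> try omega
  case J.J.J.J => exact straightens_JJJJ K hpq hqr hrs
  case J.J.J.A => exact straightens_JJJA K hpq hqr
  case J.J.J.B => exact straightens_JJJB K hpq hqr
  case J.J.A.A => exact straightens_JJAA K hpq
  case J.J.A.B => exact straightens_JJAB K hpq
  case J.J.B.B => exact straightens_JJBB K hpq
  case J.A.A.B => exact straightens_JAAB K
  case J.A.B.B => exact straightens_JABB K
  case A.A.B.B => exact straightens_AABB K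
  case J.A.A.A | J.B.B.B | A.B.B.B | B.B.B.B => exact straightens_of_self_self_self _ _
  case A.A.A.A | A.A.A.B => exact straightens_self_self_self _ _

end Straightening

section NormalForm

open Letter

variable {m : ℕ}

/-- A normal form of monomials modulo `𝒢_{D_{2m+1}}`: the exponent of `x_{1,n}`, the letters, not
yet grouped into pairs, and the indices of the variables `x_j` with `j ∈ J^c`. -/
abbrev Word (m : ℕ) : Type := ℕ × Multiset (Letter m) × Multiset (Fin (m - 1))

/-- The word of a variable: the factors of its image under `π`. -/
def DoVar.word : DoVar m → Word m
  | .x1 => (0, {A, A}, 0)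
  | .xn => (0, {B, B}, 0)
  | .xJ t => (0, {J t, J t}, 0)
  | .xJc t => (0, 0, {t})
  | .xP s t _ => (0, {J s, J t}, 0)
  | .x1n => (1, 0, 0)
  | .xK1 t => (0, {J t, A}, 0)
  | .xKn t => (0, {J t, B}, 0)
  | .yK1 t => (1, {J t, A}, 0)
  | .yKn t => (1, {J t, B}, 0)

/-- The exponent of a letter as a monomial in the `u_i`. -/
noncomputable def Letter.deg : Letter m → ℕ →₀ ℕ
  | J t => .single (2 * t + 2) 1
  | A => .single 1 2
  | B => .single (2 * m + 1) 2

/-- The exponent of the monomial in the `u_i` that a word stands for. -/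
noncomputable def Word.deg (d : Word m) : ℕ →₀ ℕ :=
  d.1 • (.single 1 1 + .single (2 * m + 1) 1) + (d.2.1.map Letter.deg).sum +
    (d.2.2.map fun t => .single (2 * t.val + 3) 1).sum

/-- The class modulo the ideal generated by `𝒢_{D_{2m+1}}` of any monomial with the given word. -/
noncomputable def Word.value (K : Type*) [Field K] (d : Word m) :
    MvPolynomial (DoVar m) K ⧸ Ideal.span (GDo K m) :=
  varClass K .x1n ^ d.1 * (pairClass_isVeronese K).pairProd d.2.1 *
    (d.2.2.map fun t => varClass K (.xJc t)).prod

lemma Word.deg_add (d e : Word m) : (d + e).deg = d.deg + e.deg := by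
  simp only [Word.deg, Prod.fst_add, Prod.snd_add, Multiset.map_add, Multiset.sum_add, add_smul]
  abel

lemma Word.value_word_add (K : Type*) [Field K] (v : DoVar m) (d : Word m) :
    (v.word + d).value K = varClass K v * d.value K := by
  have hy1 (t : Fin m) : varClass K (.yK1 t) = varClass K .x1n * varClass K (.xK1 t) := by
    simpa using (Gen.y1 t).prod_varClass K
  have hyn (t : Fin m) : varClass K (.yKn t) = varClass K .x1n * varClass K (.xKn t) := by
    simpa using (Gen.yn t).prod_varClass K
  cases v <;> simp [Word.value, DoVar.word, pow_add, pairClass_self, pairClass_of_lt, pairClass_J_A,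
    pairClass_J_B, pairClass_A_A, pairClass_B_B, mul_assoc, mul_left_comm, *]

lemma piDo_X (K : Type*) [Field K] (v : DoVar m) :
    piDo K m (X v) = monomial v.word.deg 1 := by
  have hX (i : ℕ) : (X i : MvPolynomial ℕ K) = monomial (.single i 1) 1 := rfl
  have h2 (i : ℕ) : Finsupp.single i 2 = 2 • Finsupp.single i 1 := by simp
  cases v <;> simp only [piDo, aeval_X, doImage, hX, monomial_pow, monomial_mul, one_pow, mul_one,
    DoVar.word, Word.deg, Letter.deg, h2, Multiset.insert_eq_cons, Multiset.map_cons,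
    Multiset.map_singleton, Multiset.sum_cons, Multiset.sum_singleton, Multiset.map_zero,
    Multiset.sum_zero, zero_smul, one_smul] <;> refine congrArg (monomial · 1) ?_ <;> abel

theorem mk_mon_eq_value (K : Type*) [Field K] (M : Multiset (DoVar m)) :
    Ideal.Quotient.mk (Ideal.span (GDo K m)) (mon K M) = (M.map DoVar.word).sum.value K := by
  rw [mk_mon]
  induction M using Multiset.induction with
  | empty => simp [Word.value]
  | cons v M ih => simp only [Multiset.map_cons, Multiset.prod_cons, Multiset.sum_cons, ih,
      Word.value_word_add]

theorem piDo_mon (K : Type*) [Field K] (M : Multiset (DoVar m)) :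
    piDo K m (mon K M) = monomial (M.map DoVar.word).sum.deg 1 := by
  induction M using Multiset.induction with
  | empty => simp [Word.deg, mon]
  | cons v M ih =>
    rw [← Multiset.singleton_add, mon_add, map_mul, ih, Multiset.map_add, Multiset.sum_add,
      Word.deg_add]
    simp [mon, piDo_X, monomial_mul]

lemma Word.deg_apply (d : Word m) (n : ℕ) :
    d.deg n = d.1 * (Finsupp.single 1 1 + Finsupp.single (2 * m + 1) 1 : ℕ →₀ ℕ) n +
      (d.2.1.map fun p => p.deg n).sum +
      (d.2.2.map fun t => Finsupp.single (2 * t.val + 3) 1 n).sum := by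
  have happly (s : Multiset (ℕ →₀ ℕ)) : s.sum n = (s.map fun f => f n).sum :=
    map_multiset_sum (Finsupp.applyAddHom n) s
  simp only [Word.deg, Finsupp.add_apply, Finsupp.smul_apply, happly, Multiset.map_map,
    Function.comp_def, smul_eq_mul]

lemma Word.deg_apply_odd (d : Word m) (t : Fin (m - 1)) :
    d.deg (2 * t + 3) = d.2.2.count t := by
  rw [Word.deg_apply, Multiset.sum_map_eq_nsmul_single t, Multiset.sum_eq_zero]
  · simp [Finsupp.single_apply]; omega
  · rintro _ hx
    obtain ⟨p, -, rfl⟩ := Multiset.mem_map.mp hx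
    cases p <;> simp [Letter.deg, Finsupp.single_apply] <;> omega
  · intro s hs _
    simp [Fin.val_injective.ne hs]

lemma Word.deg_apply_even (d : Word m) (t : Fin m) :
    d.deg (2 * t + 2) = d.2.1.count (J t) := by
  rw [Word.deg_apply, Multiset.sum_map_eq_nsmul_single (J t),
    Multiset.sum_eq_zero (s := d.2.2.map _)]
  · simp [Letter.deg, Finsupp.single_apply]; omega
  · simp [Finsupp.single_apply]; omega
  · rintro p hp -
    cases p <;> simp [Letter.deg, Finsupp.single_apply, Fin.ext_iff] at hp ⊢ <;> omega

lemma Word.deg_apply_one (hm : 0 < m) (d : Word m) : d.deg 1 = d.1 + 2 * d.2.1.count A := by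
  rw [Word.deg_apply, Multiset.sum_map_eq_nsmul_single A,
    Multiset.sum_eq_zero (s := d.2.2.map _)]
  · simp [Letter.deg, hm.ne', mul_comm]
  · simp +contextual [Multiset.mem_replicate]
  · rintro p hp -
    cases p <;> simp [Letter.deg, hm.ne'] at hp ⊢

lemma Word.deg_apply_last (hm : 0 < m) (d : Word m) :
    d.deg (2 * m + 1) = d.1 + 2 * d.2.1.count B := by
  rw [Word.deg_apply, Multiset.sum_map_eq_nsmul_single B,
    Multiset.sum_eq_zero (s := d.2.2.map _)]
  · simp [Letter.deg, hm.ne', mul_comm]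
  · simp [Finsupp.single_apply]; omega
  · rintro p hp -
    cases p <;> simp [Letter.deg, Finsupp.single_apply, hm.ne'] at hp ⊢; omega

theorem Word.exists_eq_of_deg_eq (hm : 0 < m) {d e : Word m} (h : d.deg = e.deg)
    (hle : d.1 ≤ e.1) :
    ∃ t, e.1 = d.1 + 2 * t ∧ d.2.1 = t • {A, B} + e.2.1 ∧ d.2.2 = e.2.2 := by
  have hodd (t : Fin (m - 1)) : d.2.2.count t = e.2.2.count t := by
    rw [← Word.deg_apply_odd, ← Word.deg_apply_odd, h]
  have heven (t : Fin m) : d.2.1.count (J t) = e.2.1.count (J t) := by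
    rw [← Word.deg_apply_even, ← Word.deg_apply_even, h]
  have hA : d.1 + 2 * d.2.1.count A = e.1 + 2 * e.2.1.count A := by
    rw [← Word.deg_apply_one hm, ← Word.deg_apply_one hm, h]
  have hB : d.1 + 2 * d.2.1.count B = e.1 + 2 * e.2.1.count B := by
    rw [← Word.deg_apply_last hm, ← Word.deg_apply_last hm, h]
  refine ⟨(e.1 - d.1) / 2, by omega, Multiset.ext.mpr fun p => ?_, Multiset.ext.mpr hodd⟩
  rw [Multiset.count_add, Multiset.count_nsmul]
  cases p
  case J t => simp [heven]
  all_goals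
    simp
    omega

theorem Word.value_eq_of_deg_eq (K : Type*) [Field K] (hm : 0 < m) {d e : Word m}
    (h : d.deg = e.deg) : d.value K = e.value K := by
  wlog hle : d.1 ≤ e.1 generalizing d e
  · exact (this h.symm (le_of_not_ge hle)).symm
  obtain ⟨t, hpow, hletters, hodd⟩ := Word.exists_eq_of_deg_eq hm h hle
  rw [Word.value, Word.value, hpow, hletters, hodd, IsVeronese.pairProd_nsmul_pair_add,
    pairClass_A_B, ← pow_mul, pow_add, ← mul_assoc]

theorem ker_piDo_le_span_GDo (K : Type*) [Field K] (hm : 0 < m) :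
    RingHom.ker (piDo K m) ≤ Ideal.span (GDo K m) :=
  ker_le_of_monomial (piDo_mon K) fun M N h => by
    rw [mk_mon_eq_value, mk_mon_eq_value, Word.value_eq_of_deg_eq K hm h]

end NormalForm

/-- `𝒢_{D_{2m+1}}` is a minimal generating set of `I_{D_{2m+1}}`: it
generates the toric ideal, and no proper subset of it generates the toric ideal. -/
theorem GDo_minimal_generating (K : Type*) [Field K] (m : ℕ) (hm : 2 ≤ m) :
    Ideal.span (GDo K m) = RingHom.ker (piDo K m) ∧
      ∀ S : Set (MvPolynomial (DoVar m) K), S ⊂ GDo K m →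
        Ideal.span S ≠ RingHom.ker (piDo K m) := by
  have hspan : Ideal.span (GDo K m) = RingHom.ker (piDo K m) :=
    (span_GDo_le_ker_piDo K).antisymm (ker_piDo_le_span_GDo K (by omega))
  exact ⟨hspan, fun S hS =>
    hspan ▸ span_ne_span_of_ssubset (fun _ hg => exists_private_monomial hg) hS⟩
end

section
/- Each of the six binomials x_7x_8 − x_9x_{10}, x_6x_9 − x_8x_{10}, x_6x_7 − x_{10}², x_4x_{10} − x_8x_9, x_4x_7 − x_9², x_4x_6 − x_8² is an indispensable binomial of I_{E_7}: every set B of binomials (differences of two monomials of R) whose generated ideal equals I_{E_7} contains each of these six binomials or its negative; consequently {x_7x_8 − x_9x_{10}, x_6x_9 − x_8x_{10}, x_6x_7 − x_{10}², x_4x_{10} − x_8x_9, x_4x_7 − x_9², x_4x_6 − x_8²} is, up to signs, the unique minimal binomial generating set of I_{E_7}. -/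
open MvPolynomial

/-- The toric map `π : K[x_1,…,x_10] → K[u_1,…,u_7]` of the `E_7` configuration, where
`x_i` is the variable `X (i-1) : MvPolynomial (Fin 10) K` and `u_j = X (j-1)` in
`MvPolynomial (Fin 7) K`:
`π(x_1)=u_1, π(x_2)=u_2, π(x_3)=u_3, π(x_4)=u_4², π(x_5)=u_5, π(x_6)=u_6², π(x_7)=u_7²,
π(x_8)=u_4u_6, π(x_9)=u_4u_7, π(x_{10})=u_6u_7`. -/
noncomputable def piE7 (K : Type*) [Field K] :
    MvPolynomial (Fin 10) K →ₐ[K] MvPolynomial (Fin 7) K :=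
  aeval ![X 0, X 1, X 2, X 3 ^ 2, X 4, X 5 ^ 2, X 6 ^ 2, X 3 * X 5, X 3 * X 6, X 5 * X 6]

/-- The set `𝒢_{E_7}` of six binomials (with `x_i = X (i-1)`):
`x_7x_8 − x_9x_{10}`, `x_6x_9 − x_8x_{10}`, `x_6x_7 − x_{10}²`, `x_4x_{10} − x_8x_9`,
`x_4x_7 − x_9²`, `x_4x_6 − x_8²`. -/
noncomputable def GE7 (K : Type*) [Field K] : Set (MvPolynomial (Fin 10) K) :=
  { X 6 * X 7 - X 8 * X 9,      -- x7x8 − x9x10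
    X 5 * X 8 - X 7 * X 9,      -- x6x9 − x8x10
    X 5 * X 6 - X 9 ^ 2,        -- x6x7 − x10²
    X 3 * X 9 - X 7 * X 8,      -- x4x10 − x8x9
    X 3 * X 6 - X 8 ^ 2,        -- x4x7 − x9²
    X 3 * X 5 - X 7 ^ 2 }       -- x4x6 − x8²

/-!
The kernel of a monomial map is spanned by the binomials `x ^ d - x ^ e` with `d` and `e` of the
same weight. For the given map, the only exponent vectors of the same weight as one of the two
terms of a quadric `g` are the two terms of `g`, and these are coprime. Hence every binomial of
the ideal other than `±g` lies in the ideal spanned by the monomials that do not divide the first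
term of `g`, while `g` does not, so no generating set of binomials can avoid `±g`. Conversely the
quadrics generate: they rewrite any product of two of the mixed variables `x₈, x₉, x₁₀` as a product
with at most one mixed variable, and a monomial with at most one mixed variable is determined by its
weight, the parities of whose coordinates at `u₄, u₆, u₇` say which mixed variable occurs.
-/

section ToricIdeals

variable {σ M R : Type*} [CommRing R]

/-- A binomial is a difference of two distinct monomials, both with coefficient `1`. -/
def IsBinomial (f : MvPolynomial σ R) : Prop :=
  ∃ d e : σ →₀ ℕ, d ≠ e ∧ f = monomial d 1 - monomial e 1

/-- A polynomial is indispensable for an ideal if it belongs, up to sign, to every set of binomials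
generating the ideal. -/
def IsIndispensable (I : Ideal (MvPolynomial σ R)) (f : MvPolynomial σ R) : Prop :=
  ∀ B : Set (MvPolynomial σ R), (∀ b ∈ B, IsBinomial b) → Ideal.span B = I → f ∈ B ∨ -f ∈ B

theorem mem_or_neg_mem_of_minimal {I : Ideal (MvPolynomial σ R)} {G B : Set (MvPolynomial σ R)}
    (hG : Ideal.span G = I) (hind : ∀ g ∈ G, IsIndispensable I g)
    (hB : ∀ b ∈ B, IsBinomial b) (hBI : Ideal.span B = I)
    (hmin : ∀ S : Set (MvPolynomial σ R), S ⊂ B → Ideal.span S ≠ I) :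
    ∀ b ∈ B, b ∈ G ∨ -b ∈ G := by
  let S := {b ∈ B | b ∈ G ∨ -b ∈ G}
  have hSB : S ⊆ B := Set.sep_subset _ _
  have hGS : G ⊆ Ideal.span S := fun g hg ↦ by
    rcases hind g hg B hB hBI with h | h
    · exact Ideal.subset_span ⟨h, .inl hg⟩
    · exact neg_mem_iff.1 (Ideal.subset_span ⟨h, .inr (by rwa [neg_neg])⟩)
  have hS : Ideal.span S = I :=
    le_antisymm (hBI ▸ Ideal.span_mono hSB) (hG ▸ Ideal.span_le.2 hGS)
  have hBS : B ⊆ S := by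
    by_contra h
    exact hmin S ⟨hSB, h⟩ hS
  exact fun b hb ↦ (hBS hb).2

theorem monomial_add_sub_monomial_add_mem {I : Ideal (MvPolynomial σ R)} {d e : σ →₀ ℕ}
    (h : monomial d 1 - monomial e 1 ∈ I) (m : σ →₀ ℕ) :
    monomial (d + m) 1 - monomial (e + m) 1 ∈ I := by
  simpa only [sub_mul, monomial_mul, one_mul] using I.mul_mem_right (monomial m 1) h

variable [AddCommMonoid M]

variable (R) in
/-- The toric ideal of a family of weights `w` is the kernel of the map to the monoid algebra
that sends the variable `X i` to the monomial of exponent `w i`. -/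
noncomputable def toricIdeal (w : σ → M) : Ideal (MvPolynomial σ R) :=
  RingHom.ker (aeval fun i ↦ AddMonoidAlgebra.single (w i) (1 : R) :
    MvPolynomial σ R →ₐ[R] AddMonoidAlgebra R M)

variable {w : σ → M}

theorem aeval_single_monomial (w : σ → M) (d : σ →₀ ℕ) (r : R) :
    aeval (fun i ↦ AddMonoidAlgebra.single (w i) (1 : R)) (monomial d r) =
      AddMonoidAlgebra.single (Finsupp.weight w d) r := by
  simp [aeval_monomial, Finsupp.weight_apply, Finsupp.prod, Finsupp.sum]

theorem monomial_sub_monomial_mem_toricIdeal {d e : σ →₀ ℕ}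
    (h : Finsupp.weight w d = Finsupp.weight w e) :
    monomial d 1 - monomial e 1 ∈ toricIdeal R w := by
  rw [toricIdeal, RingHom.mem_ker, map_sub, aeval_single_monomial, aeval_single_monomial, h,
    sub_self]

theorem weight_eq_of_monomial_sub_monomial_mem_toricIdeal [Nontrivial R] {d e : σ →₀ ℕ}
    (h : monomial d 1 - monomial e 1 ∈ toricIdeal R w) :
    Finsupp.weight w d = Finsupp.weight w e := by
  rw [toricIdeal, RingHom.mem_ker, map_sub, aeval_single_monomial, aeval_single_monomial,
    sub_eq_zero] at h
  exact AddMonoidAlgebra.single_left_injective one_ne_zero h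

theorem toricIdeal_le {I : Ideal (MvPolynomial σ R)}
    (hI : ∀ d e : σ →₀ ℕ, Finsupp.weight w d = Finsupp.weight w e →
      monomial d 1 - monomial e 1 ∈ I) :
    toricIdeal R w ≤ I := by
  let lift := Function.invFun (Finsupp.weight w : (σ →₀ ℕ) → M)
  have weight_lift (d) : Finsupp.weight w (lift (Finsupp.weight w d)) = Finsupp.weight w d :=
    Function.invFun_eq ⟨d, rfl⟩
  have sub_lift_mem (f : MvPolynomial σ R) :
      f - AddMonoidAlgebra.mapDomain lift
        (aeval (fun i ↦ AddMonoidAlgebra.single (w i) (1 : R)) f) ∈ I := by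
    induction f using MvPolynomial.induction_on' with
    | monomial d r =>
      rw [aeval_single_monomial, AddMonoidAlgebra.mapDomain_single, single_eq_monomial]
      simpa only [mul_sub, C_mul_monomial, mul_one]
        using I.mul_mem_left (C r) (hI _ _ (weight_lift d).symm)
    | add f g hf hg =>
      rw [map_add, AddMonoidAlgebra.mapDomain_add, add_sub_add_comm]
      exact I.add_mem hf hg
  intro f hf
  have := sub_lift_mem f
  rwa [RingHom.mem_ker.1 hf, AddMonoidAlgebra.mapDomain_zero, sub_zero] at this

theorem toricIdeal_le_of_reduction {I : Ideal (MvPolynomial σ R)} {N : Set (σ →₀ ℕ)}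
    (μ : (σ →₀ ℕ) → ℕ) (hN : Set.InjOn (Finsupp.weight w) N)
    (hred : ∀ d ∉ N, ∃ e, μ e < μ d ∧ Finsupp.weight w d = Finsupp.weight w e ∧
      monomial d 1 - monomial e 1 ∈ I) :
    toricIdeal R w ≤ I := by
  have exists_normalForm (d : σ →₀ ℕ) : ∃ n ∈ N, Finsupp.weight w d = Finsupp.weight w n ∧
      monomial d 1 - monomial n 1 ∈ I := by
    induction d using (measure μ).wf.induction with
    | _ d ih =>
      by_cases hd : d ∈ N
      · exact ⟨d, hd, rfl, by simp⟩
      · obtain ⟨e, hμ, hde, hdeI⟩ := hred d hd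
        obtain ⟨n, hn, hen, henI⟩ := ih e hμ
        exact ⟨n, hn, hde.trans hen, by simpa using I.add_mem hdeI henI⟩
  refine toricIdeal_le fun d e hde ↦ ?_
  obtain ⟨n, hn, hdn, hdnI⟩ := exists_normalForm d
  obtain ⟨n', hn', hen, henI⟩ := exists_normalForm e
  obtain rfl : n = n' := hN hn hn' (hdn.symm.trans (hde.trans hen))
  simpa using I.sub_mem hdnI henI

theorem eq_and_eq_of_le_of_fiber_eq_pair {p q d e : σ →₀ ℕ} {c : M} (hpq : Disjoint p q)
    (hfib : Finsupp.weight w ⁻¹' {c} = {p, q}) (hne : d ≠ e)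
    (hde : Finsupp.weight w d = Finsupp.weight w e) (hdp : d ≤ p) : d = p ∧ e = q := by
  obtain ⟨m, rfl⟩ := exists_add_of_le hdp
  have hp : Finsupp.weight w (d + m) = c := hfib.ge (.inl rfl)
  have hem : e + m ∈ ({d + m, q} : Set (σ →₀ ℕ)) :=
    hfib.le (by rwa [Set.mem_preimage, map_add, ← hde, ← map_add])
  rcases hem with h | rfl
  · exact absurd (add_right_cancel h).symm hne
  · obtain rfl : m = 0 := le_bot_iff.1 (hpq le_add_self le_add_self)
    simp

theorem isIndispensable_of_fiber_eq_pair [Nontrivial R] {p q : σ →₀ ℕ} {c : M} (hne : p ≠ q)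
    (hpq : Disjoint p q) (hfib : Finsupp.weight w ⁻¹' {c} = {p, q}) :
    IsIndispensable (toricIdeal R w) (monomial p 1 - monomial q 1) := by
  intro B hB hBI
  by_contra! hnot
  have hp : Finsupp.weight w p = c := hfib.ge (.inl rfl)
  have hq : Finsupp.weight w q = c := hfib.ge (.inr rfl)
  have hB_le : Ideal.span B ≤
      Ideal.span ((fun d ↦ monomial d (1 : R)) '' {d : σ →₀ ℕ | ¬ d ≤ p}) := by
    refine Ideal.span_le.2 fun b hb ↦ ?_
    obtain ⟨d, e, hde, rfl⟩ := hB b hb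
    have hw : Finsupp.weight w d = Finsupp.weight w e :=
      weight_eq_of_monomial_sub_monomial_mem_toricIdeal (hBI ▸ Ideal.subset_span hb)
    have hd : ¬ d ≤ p := fun h ↦ by
      obtain ⟨rfl, rfl⟩ := eq_and_eq_of_le_of_fiber_eq_pair hpq hfib hde hw h
      exact hnot.1 hb
    have he : ¬ e ≤ p := fun h ↦ by
      obtain ⟨rfl, rfl⟩ := eq_and_eq_of_le_of_fiber_eq_pair hpq hfib hde.symm hw.symm h
      exact hnot.2 (by rwa [neg_sub])
    exact sub_mem (Ideal.subset_span ⟨d, hd, rfl⟩) (Ideal.subset_span ⟨e, he, rfl⟩)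
  have hmem : monomial p 1 - monomial q 1 ∈ Ideal.span B :=
    hBI ▸ monomial_sub_monomial_mem_toricIdeal (hp.trans hq.symm)
  have hsupp : p ∈ (monomial p (1 : R) - monomial q 1).support := by
    classical simp [mem_support_iff, coeff_sub, coeff_monomial, hne.symm]
  obtain ⟨d, hd, hdp⟩ := mem_ideal_span_monomial_image.1 (hB_le hmem) p hsupp
  exact hd hdp

end ToricIdeals

section Quadrics

variable {σ : Type*}

/-- The exponent vector of the monomial `X s.1 * X s.2`. -/
noncomputable def pairExponent (s : σ × σ) : σ →₀ ℕ :=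
  Finsupp.single s.1 1 + Finsupp.single s.2 1

theorem monomial_pairExponent {R : Type*} [CommSemiring R] (s : σ × σ) :
    (monomial (pairExponent s) 1 : MvPolynomial σ R) = X s.1 * X s.2 := by
  simp [X, monomial_mul, pairExponent]

theorem pairExponent_ne_zero (s : σ × σ) : pairExponent s ≠ 0 := by
  simp [pairExponent]

theorem disjoint_pairExponent [DecidableEq σ] {s t : σ × σ}
    (h : Disjoint ({s.1, s.2} : Finset σ) {t.1, t.2}) :
    Disjoint (pairExponent s) (pairExponent t) := by
  have support_subset (s : σ × σ) : (pairExponent s).support ⊆ {s.1, s.2} :=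
    Finsupp.support_add.trans
      (Finset.union_subset_union Finsupp.support_single_subset Finsupp.support_single_subset)
  exact Finsupp.disjoint_iff.2 (h.mono (support_subset s) (support_subset t))

end Quadrics

/-- The exponent vectors of the monomials `piE7 K (X i)`. -/
noncomputable def e7Weight : Fin 10 → Fin 7 →₀ ℕ :=
  ![Finsupp.single 0 1, Finsupp.single 1 1, Finsupp.single 2 1, pairExponent (3, 3),
    Finsupp.single 4 1, pairExponent (5, 5), pairExponent (6, 6), pairExponent (3, 5),
    pairExponent (3, 6), pairExponent (5, 6)]

/-- The index pairs `((i, j), (k, l))` of the quadrics `X i * X j - X k * X l` of `GE7`, oriented so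
that `(k, l)` runs over all unordered pairs of the mixed variables `X 7`, `X 8`, `X 9`. -/
def e7Rules : Finset ((Fin 10 × Fin 10) × (Fin 10 × Fin 10)) :=
  {((6, 7), (8, 9)), ((5, 8), (7, 9)), ((5, 6), (9, 9)), ((3, 9), (7, 8)), ((3, 6), (8, 8)),
    ((3, 5), (7, 7))}

/-- The quadrics of `GE7`, over an arbitrary commutative ring. -/
def e7Quadrics (R : Type*) [CommRing R] : Set (MvPolynomial (Fin 10) R) :=
  {f | ∃ r ∈ e7Rules, f = X r.1.1 * X r.1.2 - X r.2.1 * X r.2.2}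

theorem e7Quadrics_eq_GE7 (K : Type*) [Field K] : e7Quadrics K = GE7 K := by
  ext f
  simp [e7Quadrics, e7Rules, GE7, pow_two]

theorem toricIdeal_e7Weight_eq_ker (K : Type*) [Field K] :
    toricIdeal K e7Weight = RingHom.ker (piE7 K) := by
  have h : piE7 K = aeval fun i ↦ monomial (e7Weight i) 1 := by
    refine algHom_ext fun i ↦ ?_
    rw [piE7, aeval_X, aeval_X]
    fin_cases i <;> simp [e7Weight, monomial_pairExponent, pow_two, X]
  rw [h]
  rfl

theorem weight_e7Weight_eq_iff (d e : Fin 10 →₀ ℕ) :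
    Finsupp.weight e7Weight d = Finsupp.weight e7Weight e ↔
      d 0 = e 0 ∧ d 1 = e 1 ∧ d 2 = e 2 ∧
      2 * d 3 + d 7 + d 8 = 2 * e 3 + e 7 + e 8 ∧ d 4 = e 4 ∧
      2 * d 5 + d 7 + d 9 = 2 * e 5 + e 7 + e 9 ∧
      2 * d 6 + d 8 + d 9 = 2 * e 6 + e 8 + e 9 := by
  have coords (d : Fin 10 →₀ ℕ) : ⇑(Finsupp.weight e7Weight d) =
      ![d 0, d 1, d 2, 2 * d 3 + d 7 + d 8, d 4, 2 * d 5 + d 7 + d 9, 2 * d 6 + d 8 + d 9] := by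
    ext j
    rw [Finsupp.weight_eq_sum, Finsupp.finsetSum_apply]
    fin_cases j <;> simp [e7Weight, pairExponent, Fin.sum_univ_succ, mul_comm, add_assoc]
  rw [← DFunLike.coe_fn_eq, coords, coords]
  simp

theorem weight_e7Weight_injOn :
    Set.InjOn (Finsupp.weight e7Weight) {d | d 7 + d 8 + d 9 ≤ 1} := by
  intro d hd e he h
  rw [weight_e7Weight_eq_iff] at h
  rw [Set.mem_ofPred_eq] at hd he
  ext i
  fin_cases i <;> simp only [Fin.reduceFinMk] <;> omega

theorem weight_e7Weight_preimage_pairExponent {r} (hr : r ∈ e7Rules) :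
    Finsupp.weight e7Weight ⁻¹' {Finsupp.weight e7Weight (pairExponent r.1)} =
      {pairExponent r.1, pairExponent r.2} := by
  ext d
  rw [Set.mem_preimage, Set.mem_singleton_iff, weight_e7Weight_eq_iff, Set.mem_insert_iff,
    Set.mem_singleton_iff, Finsupp.ext_iff, Finsupp.ext_iff]
  fin_cases hr <;>
    simp only [pairExponent, Finsupp.add_apply, Finsupp.single_apply, Fin.forall_fin_succ,
      IsEmpty.forall_iff, and_true, Fin.isValue, Fin.reduceEq, Fin.reduceSucc, reduceIte] <;>
    omega

theorem weight_e7Weight_pairExponent_eq {r} (hr : r ∈ e7Rules) :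
    Finsupp.weight e7Weight (pairExponent r.1) = Finsupp.weight e7Weight (pairExponent r.2) :=
  ((weight_e7Weight_preimage_pairExponent hr).ge (.inr rfl)).symm

theorem isIndispensable_of_mem_e7Quadrics {R : Type*} [CommRing R] [Nontrivial R]
    {g : MvPolynomial (Fin 10) R} (hg : g ∈ e7Quadrics R) :
    IsIndispensable (toricIdeal R e7Weight) g := by
  obtain ⟨r, hr, rfl⟩ := hg
  have hdisj : Disjoint (pairExponent r.1) (pairExponent r.2) :=
    disjoint_pairExponent (by fin_cases hr <;> decide)
  have hne : pairExponent r.1 ≠ pairExponent r.2 :=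
    hdisj.ne (pairExponent_ne_zero r.1)
  simpa only [monomial_pairExponent] using
    isIndispensable_of_fiber_eq_pair (R := R) hne hdisj (weight_e7Weight_preimage_pairExponent hr)

theorem exists_mem_e7Rules_pairExponent_le {d : Fin 10 →₀ ℕ} (hd : 2 ≤ d 7 + d 8 + d 9) :
    ∃ r ∈ e7Rules, pairExponent r.2 ≤ d := by
  have hdvd : (1 ≤ d 8 ∧ 1 ≤ d 9) ∨ (1 ≤ d 7 ∧ 1 ≤ d 9) ∨ 2 ≤ d 9 ∨ (1 ≤ d 7 ∧ 1 ≤ d 8) ∨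
      2 ≤ d 8 ∨ 2 ≤ d 7 := by
    omega
  simpa [e7Rules, Finsupp.le_def, pairExponent, Finsupp.single_apply, Fin.forall_fin_succ]
    using hdvd

theorem toricIdeal_e7Weight_le (R : Type*) [CommRing R] :
    toricIdeal R e7Weight ≤ Ideal.span (e7Quadrics R) := by
  refine toricIdeal_le_of_reduction (fun d ↦ d 7 + d 8 + d 9) weight_e7Weight_injOn fun d hd ↦ ?_
  rw [Set.mem_ofPred_eq, not_le] at hd
  obtain ⟨r, hr, hrd⟩ := exists_mem_e7Rules_pairExponent_le hd
  obtain ⟨m, rfl⟩ := exists_add_of_le hrd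
  refine ⟨pairExponent r.1 + m, ?_, ?_, ?_⟩
  · have : pairExponent r.1 7 + pairExponent r.1 8 + pairExponent r.1 9 <
        pairExponent r.2 7 + pairExponent r.2 8 + pairExponent r.2 9 := by
      fin_cases hr <;> simp [pairExponent]
    simp only [Finsupp.add_apply]
    omega
  · rw [map_add, map_add, weight_e7Weight_pairExponent_eq hr]
  · have : X r.1.1 * X r.1.2 - X r.2.1 * X r.2.2 ∈ Ideal.span (e7Quadrics R) :=
      Ideal.subset_span ⟨r, hr, rfl⟩
    refine monomial_add_sub_monomial_add_mem ?_ m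
    rwa [monomial_pairExponent, monomial_pairExponent, ← neg_mem_iff, neg_sub]

theorem span_e7Quadrics (R : Type*) [CommRing R] :
    Ideal.span (e7Quadrics R) = toricIdeal R e7Weight := by
  refine le_antisymm (Ideal.span_le.2 ?_) (toricIdeal_e7Weight_le R)
  rintro _ ⟨r, hr, rfl⟩
  simpa only [monomial_pairExponent, SetLike.mem_coe] using
    monomial_sub_monomial_mem_toricIdeal (R := R) (weight_e7Weight_pairExponent_eq hr)

theorem GE7_indispensable_general (R : Type*) [CommRing R] [Nontrivial R] :
    (∀ B : Set (MvPolynomial (Fin 10) R), (∀ b ∈ B, IsBinomial b) →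
      Ideal.span B = toricIdeal R e7Weight → ∀ g ∈ e7Quadrics R, g ∈ B ∨ -g ∈ B) ∧
    (∀ B : Set (MvPolynomial (Fin 10) R), (∀ b ∈ B, IsBinomial b) →
      Ideal.span B = toricIdeal R e7Weight →
      (∀ S : Set (MvPolynomial (Fin 10) R), S ⊂ B → Ideal.span S ≠ toricIdeal R e7Weight) →
      ∀ b ∈ B, b ∈ e7Quadrics R ∨ -b ∈ e7Quadrics R) :=
  ⟨fun B hB hBI _ hg ↦ isIndispensable_of_mem_e7Quadrics hg B hB hBI,
    fun _ ↦ mem_or_neg_mem_of_minimal (span_e7Quadrics R)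
      fun _ ↦ isIndispensable_of_mem_e7Quadrics⟩

/-- each of the six binomials of `𝒢_{E_7}` is indispensable: every set `B` of
binomials generating `I_{E_7}` contains each of them or its negative; consequently `𝒢_{E_7}`
is, up to signs, the unique minimal binomial generating set of `I_{E_7}` (every minimal
binomial generating set consists, up to sign, of exactly these six binomials). -/
theorem GE7_indispensable (K : Type*) [Field K] :
    (∀ B : Set (MvPolynomial (Fin 10) K),
      (∀ b ∈ B, ∃ d e : Fin 10 →₀ ℕ, d ≠ e ∧ b = monomial d (1 : K) - monomial e (1 : K)) →
      Ideal.span B = RingHom.ker (piE7 K) →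
      ∀ g ∈ GE7 K, g ∈ B ∨ -g ∈ B) ∧
    (∀ B : Set (MvPolynomial (Fin 10) K),
      (∀ b ∈ B, ∃ d e : Fin 10 →₀ ℕ, d ≠ e ∧ b = monomial d (1 : K) - monomial e (1 : K)) →
      Ideal.span B = RingHom.ker (piE7 K) →
      (∀ S : Set (MvPolynomial (Fin 10) K), S ⊂ B →
        Ideal.span S ≠ RingHom.ker (piE7 K)) →
      ∀ b ∈ B, b ∈ GE7 K ∨ -b ∈ GE7 K) := by
  rw [← toricIdeal_e7Weight_eq_ker, ← e7Quadrics_eq_GE7]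
  exact GE7_indispensable_general K
end
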